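/- arXiv:1409.5822 — 17 statements merged into one kernel-verified Lean document; each statement's English description precedes it below -/
import Mathlib

section
/- Let U be a non-empty finite set of complex roots of unity, and for every natural number k let a_k = Σ_{ζ∈U} ζ^k. Then all a_k are non-negative integers if and only if U is a multiplicative group of roots of unity, i.e. there exists a positive integer n such that U = {ζ ∈ ℂ : ζ^n = 1}. -/
/-!
The power sum `a_k` is the discrete Fourier transform of the indicator function of `U`, so the
condition `a_k ≥ 0` says that this indicator is positive definite on the group of `N`-th roots
of unity, where `N` is a common exponent of the elements of `U`.  A positive definite function
takes its maximal modulus at `1`, and it is classical that the points where it equals its value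
at `1` form a subgroup; for an indicator function these points are exactly `U`.

Concretely, Fourier inversion (`sum_powerSum_mul_inv_pow`) gives `∑_{k<N} a_k z⁻ᵏ = N` for
`z ∈ U` and `0` for the other `N`-th roots of unity `z`.  As `a_0 > 0`, the value at `z = 1` is
nonzero, so `1 ∈ U` and `∑ a_k = N`.  For `z ∈ U`, comparing real parts of `∑ a_k z⁻ᵏ = ∑ a_k`
forces `zᵏ = 1` whenever `a_k ≠ 0`; conversely this condition on an `N`-th root of unity `z`
gives `∑ a_k z⁻ᵏ = N`, so `z ∈ U`.  Hence `U` is the set of `n`-th roots of unity with `n` the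
gcd of `N` and of all `k < N` such that `a_k ≠ 0`.

The converse is the vanishing of the `k`-th power sum of the `n`-th roots of unity for `n ∤ k`.
-/

open Finset

lemma geom_sum_root_of_unity {u : ℂ} {N : ℕ} (hu : u ^ N = 1) :
    ∑ k ∈ range N, u ^ k = if u = 1 then (N : ℂ) else 0 := by
  split_ifs with h
  · simp [h]
  · rw [geom_sum_eq h, hu, sub_self, zero_div]

/-- Fourier inversion for the indicator function of `U` on the `N`-th roots of unity. -/
lemma sum_powerSum_mul_inv_pow {U : Finset ℂ} {N : ℕ} (hN : 0 < N)
    (hU : ∀ w ∈ U, w ^ N = 1) {z : ℂ} (hz : z ^ N = 1) :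
    ∑ k ∈ range N, (∑ w ∈ U, w ^ k) * (z⁻¹) ^ k = if z ∈ U then (N : ℂ) else 0 := by
  have hz0 : z ≠ 0 := by
    rintro rfl
    simp [hN.ne'] at hz
  simp_rw [sum_mul, ← mul_pow]
  rw [sum_comm]
  have h : ∀ w ∈ U, ∑ k ∈ range N, (w * z⁻¹) ^ k = if w = z then (N : ℂ) else 0 := by
    intro w hw
    rw [geom_sum_root_of_unity (by rw [mul_pow, inv_pow, hU w hw, hz]; simp)]
    simp [mul_inv_eq_one₀ hz0]
  rw [sum_congr rfl h, sum_ite_eq']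

/-- The equality case of the triangle inequality for a sum of unit complex numbers with
non-negative weights. -/
lemma eq_one_of_weighted_sum_eq {s : Finset ℕ} {a : ℕ → ℕ} {u : ℕ → ℂ}
    (hu : ∀ k ∈ s, ‖u k‖ = 1) (h : ∑ k ∈ s, (a k : ℂ) * u k = ∑ k ∈ s, (a k : ℂ))
    {k : ℕ} (hk : k ∈ s) (hak : a k ≠ 0) : u k = 1 := by
  have hle : ∀ j ∈ s, (u j).re ≤ 1 := fun j hj => (Complex.re_le_norm _).trans (hu j hj).le
  have hsum : ∑ j ∈ s, (a j : ℝ) * (1 - (u j).re) = 0 := by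
    have := congrArg Complex.re h
    simp only [Complex.re_sum, Complex.mul_re, Complex.natCast_re, Complex.natCast_im,
      zero_mul, sub_zero] at this
    simp only [mul_sub, mul_one, sum_sub_distrib, this, sub_self]
  have hterm := (sum_eq_zero_iff_of_nonneg fun j hj =>
    mul_nonneg (Nat.cast_nonneg _) (sub_nonneg.2 (hle j hj))).1 hsum k hk
  have hre : (u k).re = 1 := by
    rcases mul_eq_zero.1 hterm with h0 | h0
    · exact absurd (Nat.cast_eq_zero.1 h0) hak
    · linarith
  have him : (u k).im = 0 := by
    have h1 := Complex.sq_norm (u k)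
    rw [hu k hk, Complex.normSq_apply, hre] at h1
    nlinarith
  exact Complex.ext (by simpa using hre) (by simpa using him)

lemma powerSum_all_roots {U : Finset ℂ} {n : ℕ} (hn : 0 < n)
    (hU : (U : Set ℂ) = {ζ : ℂ | ζ ^ n = 1}) (k : ℕ) :
    ∃ a : ℕ, (∑ ζ ∈ U, ζ ^ k) = (a : ℂ) := by
  have hp := Complex.isPrimitiveRoot_exp n hn.ne'
  set ω := Complex.exp (2 * Real.pi * Complex.I / n)
  have hmem : ∀ z, z ∈ U ↔ z ^ n = 1 := fun z => by
    rw [← mem_coe, hU, Set.mem_ofPred_eq]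
  have hω0 : ω ≠ 0 := Complex.exp_ne_zero _
  -- multiplication by `ω` permutes `U`, hence multiplies the power sum by `ω ^ k`
  have hperm : ∑ ζ ∈ U, (ω * ζ) ^ k = ∑ ζ ∈ U, ζ ^ k := by
    refine sum_bij' (fun z _ => ω * z) (fun z _ => ω⁻¹ * z) ?_ ?_ ?_ ?_ ?_
    · intro z hz
      rw [hmem] at hz ⊢
      rw [mul_pow, hp.pow_eq_one, hz, one_mul]
    · intro z hz
      rw [hmem] at hz ⊢
      rw [mul_pow, inv_pow, hp.pow_eq_one, hz, inv_one, one_mul]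
    · intro z _
      exact inv_mul_cancel_left₀ hω0 z
    · intro z _
      exact mul_inv_cancel_left₀ hω0 z
    · intro z _
      rfl
  simp_rw [mul_pow, ← mul_sum] at hperm
  by_cases hk : ω ^ k = 1
  · obtain ⟨m, rfl⟩ := hp.dvd_of_pow_eq_one k hk
    refine ⟨U.card, ?_⟩
    rw [sum_congr rfl fun z hz => by rw [pow_mul, (hmem z).1 hz, one_pow]]
    simp
  · refine ⟨0, ?_⟩
    by_contra h0
    exact hk ((mul_eq_right₀ (by simpa using h0)).1 hperm)

/-- **A theorem on roots of unity.** Let `U` be a non-empty finite set of complex roots of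
unity and consider the power sums `a_k = ∑ ζ ∈ U, ζ ^ k`. Then all `a_k` are non-negative
integers iff `U` is a multiplicative group of roots of unity, i.e. the set of all `n`-th
roots of unity for some `n > 0`. -/
theorem roots_of_unity_power_sums_nonneg_int_iff_group
    (U : Finset ℂ) (hU : U.Nonempty)
    (hroots : ∀ ζ ∈ U, ∃ m : ℕ, 0 < m ∧ ζ ^ m = 1) :
    (∀ k : ℕ, ∃ a : ℕ, (∑ ζ ∈ U, ζ ^ k) = (a : ℂ)) ↔
      ∃ n : ℕ, 0 < n ∧ (U : Set ℂ) = {ζ : ℂ | ζ ^ n = 1} := by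
  refine ⟨fun h => ?_, fun ⟨n, hn, h⟩ => powerSum_all_roots hn h⟩
  choose a ha using h
  obtain ⟨N, hN, hUN⟩ : ∃ N : ℕ, 0 < N ∧ ∀ w ∈ U, w ^ N = 1 := by
    refine ⟨∏ w ∈ U, orderOf w, prod_pos fun w hw => ?_, fun w hw => ?_⟩
    · exact orderOf_pos_iff.2 (isOfFinOrder_iff_pow_eq_one.2 (hroots w hw))
    · exact orderOf_dvd_iff_pow_eq_one.1 (dvd_prod_of_mem _ hw)
  have hinv : ∀ z : ℂ, z ^ N = 1 →
      ∑ k ∈ range N, (a k : ℂ) * (z⁻¹) ^ k = if z ∈ U then (N : ℂ) else 0 := by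
    intro z hz
    rw [← sum_powerSum_mul_inv_pow hN hUN hz]
    simp_rw [ha]
  have ha0 : a 0 ≠ 0 := by
    have h0 := ha 0
    simp only [pow_zero, sum_const, nsmul_eq_mul, mul_one, Nat.cast_inj] at h0
    rw [← h0]
    exact hU.card_pos.ne'
  have htotal : ∑ k ∈ range N, (a k : ℂ) = N := by
    have h1 := hinv 1 (one_pow N)
    simp only [inv_one, one_pow, mul_one] at h1
    split_ifs at h1 with hmem
    · exact h1
    · exfalso
      have h2 : ∑ k ∈ range N, a k = 0 := by exact_mod_cast h1
      exact ha0 (sum_eq_zero_iff.1 h2 0 (mem_range.2 hN))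
  have hchar : ∀ z : ℂ, z ∈ U ↔ z ^ N = 1 ∧ ∀ k ∈ range N, a k ≠ 0 → z ^ k = 1 := by
    intro z
    constructor
    · intro hz
      refine ⟨hUN z hz, fun k hk hak => ?_⟩
      have hnorm : ‖z‖ = 1 := Complex.norm_eq_one_of_pow_eq_one (hUN z hz) hN.ne'
      have h1 := hinv z (hUN z hz)
      rw [if_pos hz, ← htotal] at h1
      have h2 := eq_one_of_weighted_sum_eq (u := fun k => (z⁻¹) ^ k)
        (fun j _ => by simp [hnorm]) h1 hk hak
      simpa using h2
    · rintro ⟨hzN, hz⟩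
      by_contra hzU
      have h1 := hinv z hzN
      rw [if_neg hzU] at h1
      have h2 : ∑ k ∈ range N, (a k : ℂ) * (z⁻¹) ^ k = ∑ k ∈ range N, (a k : ℂ) := by
        refine sum_congr rfl fun k hk => ?_
        by_cases hak : a k = 0
        · simp [hak]
        · rw [inv_pow, hz k hk hak, inv_one, mul_one]
      rw [h1, htotal] at h2
      exact hN.ne' (Nat.cast_eq_zero.1 h2.symm)
  refine ⟨Nat.gcd N (((range N).filter fun k => a k ≠ 0).gcd id),
    Nat.gcd_pos_of_pos_left _ hN, ?_⟩
  ext z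
  rw [mem_coe, hchar, Set.mem_ofPred_eq, ← orderOf_dvd_iff_pow_eq_one (n := Nat.gcd _ _),
    Nat.dvd_gcd_iff, Finset.dvd_gcd_iff, orderOf_dvd_iff_pow_eq_one]
  simp only [mem_filter, and_imp, id, orderOf_dvd_iff_pow_eq_one]
end

section
/- The following are equivalent: (i) a_C(E) ≥ 0 for all C ⊆ S; (ii) E is a filter in S, i.e. there exists A ⊆ S with E = {D ⊆ S : A ⊆ D}. -/
/-!
Pass to complements `B = S \ D` and put `x p = exp (w p) > 1`. Then `a_C(E)` is the value of the
multilinear polynomial `∑_{S \ B ∈ E} ∏_{p ∈ B} y p` at the vertex `y` of the box `∏ [-1, x p]`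
given by `y p = x p` for `p ∈ C` and `y p = -1` otherwise (`altSum_eq_boxPoly`). If `E` is the
filter of `A`, this polynomial is `∏_{p ∈ S \ A} (1 + y p)`, which is non-negative on the box.

The converse says that a nonzero multilinear polynomial `f` with coefficients in `{0, 1}` that is
non-negative on the vertices is `∏_{p ∈ T} (1 + y p)` for some `T` (`exists_of_boxPoly_nonneg`).
It goes by induction on the number of variables. Write `f = g + y_p h`; then `g - h ≥ 0` and
`g + x_p h ≥ 0`, so `g ≥ 0`, and `g = 0` would force `h = 0`. Hence `g = ∏_{T} (1 + y_i)` by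
induction. Wherever `y_i = -1` for some `i ∈ T`, `g` vanishes and hence so does `h`; a multilinear
polynomial is determined by its values on the vertices (`boxPoly_ext`), so `h = g k` with `k` free
of the variables in `T`. At the vertex `y = x`, `h ≤ g` gives `k(x) ≤ 1`, and since all `x_i > 1`
and `k` has coefficients in `{0, 1}`, `k` is the constant `0` or `1`.
-/

open Finset

/-- The alternating sum `a_C(E) = (−1)^{|S|} ∑_{D ∈ E} (−1)^{|C ∪ D|} exp(μ(C \ D))`,
where `μ(C) = ∑_{p ∈ C} w p`. -/
noncomputable def altSum {α : Type*} [DecidableEq α] (S : Finset α) (w : α → ℝ)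
    (E : Finset (Finset α)) (C : Finset α) : ℝ :=
  (-1 : ℝ) ^ S.card * ∑ D ∈ E, (-1 : ℝ) ^ (C ∪ D).card * Real.exp (∑ p ∈ C \ D, w p)

/-- The vertex of the box `∏ [-1, x p]` indexed by `C`: coordinates in `C` are at the upper end. -/
def boxVertex {α : Type*} [DecidableEq α] (x : α → ℝ) (C : Finset α) (p : α) : ℝ :=
  if p ∈ C then x p else -1

/-- The value at the vertex `boxVertex x C` of the multilinear polynomial in the variables `S` with
coefficients `c B`, `B ⊆ S`. -/
def boxPoly {α : Type*} [DecidableEq α] (x : α → ℝ) (S : Finset α) (c : Finset α → ℝ)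
    (C : Finset α) : ℝ :=
  ∑ B ∈ S.powerset, c B * ∏ p ∈ B, boxVertex x C p

section

variable {α : Type*} [DecidableEq α] {x : α → ℝ}

lemma boxPoly_insert {S : Finset α} {p : α} (hp : p ∉ S) (c : Finset α → ℝ) (C : Finset α) :
    boxPoly x (insert p S) c C =
      boxPoly x S c C + boxVertex x C p * boxPoly x S (fun B => c (insert p B)) C := by
  unfold boxPoly
  rw [Finset.sum_powerset_insert hp, Finset.mul_sum]
  congr 1
  refine Finset.sum_congr rfl fun B hB => ?_
  rw [Finset.prod_insert (fun h => hp (Finset.mem_powerset.1 hB h))]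
  ring

lemma boxPoly_insert_vertex {S : Finset α} {p : α} (hp : p ∉ S) (c : Finset α → ℝ)
    (C : Finset α) : boxPoly x S c (insert p C) = boxPoly x S c C := by
  unfold boxPoly
  refine Finset.sum_congr rfl fun B hB => ?_
  congr 1
  refine Finset.prod_congr rfl fun i hi => ?_
  have : i ≠ p := by
    rintro rfl
    exact hp (Finset.mem_powerset.1 hB hi)
  simp [boxVertex, this]

lemma boxPoly_sub (S : Finset α) (c d : Finset α → ℝ) (C : Finset α) :
    boxPoly x S (fun B => c B - d B) C = boxPoly x S c C - boxPoly x S d C := by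
  simp [boxPoly, sub_mul, Finset.sum_sub_distrib]

/-- A multilinear polynomial vanishing at all vertices of the box is zero. -/
lemma boxPoly_ext (S : Finset α) (hx : ∀ p ∈ S, 1 < x p) :
    ∀ c : Finset α → ℝ, (∀ C ⊆ S, boxPoly x S c C = 0) → ∀ B ⊆ S, c B = 0 := by
  induction S using Finset.induction_on with
  | empty =>
    intro c h B hB
    have := h ∅ (Finset.Subset.refl _)
    rw [Finset.subset_empty.1 hB]
    simpa [boxPoly] using this
  | insert p S hp ih =>
    intro c h B hB
    have hx' : ∀ i ∈ S, 1 < x i := fun i hi => hx i (Finset.mem_insert_of_mem hi)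
    have hxp := hx p (Finset.mem_insert_self _ _)
    have key : ∀ C ⊆ S, boxPoly x S c C = 0 ∧ boxPoly x S (fun B => c (insert p B)) C = 0 := by
      intro C hC
      have hpC : p ∉ C := fun h => hp (hC h)
      have h1 := h C (hC.trans (Finset.subset_insert _ _))
      have h2 := h (insert p C) (Finset.insert_subset_insert _ hC)
      rw [boxPoly_insert hp] at h1 h2
      rw [boxPoly_insert_vertex hp, boxPoly_insert_vertex hp] at h2
      simp only [boxVertex, hpC, if_false, Finset.mem_insert_self, if_true] at h1 h2
      have h3 : (x p + 1) * boxPoly x S (fun B => c (insert p B)) C = 0 := by linarith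
      rcases mul_eq_zero.1 h3 with h4 | h4
      · linarith
      · rw [h4] at h1
        exact ⟨by linarith, h4⟩
    by_cases hpB : p ∈ B
    · have := ih hx' (fun B => c (insert p B)) (fun C hC => (key C hC).2) (B.erase p)
        (Finset.subset_insert_iff.1 hB)
      simpa [Finset.insert_erase hpB] using this
    · exact ih hx' c (fun C hC => (key C hC).1) B ((Finset.subset_insert_iff_of_notMem hpB).1 hB)

lemma boxPoly_indicator {S T : Finset α} (hT : T ⊆ S) (c : Finset α → ℝ)
    (hc : ∀ B ⊆ S, c B = if B ⊆ T then 1 else 0) (C : Finset α) :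
    boxPoly x S c C = ∏ p ∈ T, (1 + boxVertex x C p) := by
  rw [Finset.prod_one_add, boxPoly]
  symm
  refine Finset.sum_subset_zero_on_sdiff (Finset.powerset_mono.2 hT) ?_ ?_
  · intro B hB
    rw [Finset.mem_sdiff, Finset.mem_powerset, Finset.mem_powerset] at hB
    rw [hc B hB.1, if_neg hB.2, zero_mul]
  · intro B hB
    rw [Finset.mem_powerset] at hB
    rw [hc B (hB.trans hT), if_pos hB, one_mul]

/-- If the coefficients do not see the variables in `T`, then `∏_{T} (1 + y_i)` factors out. -/
lemma boxPoly_factor (U : Finset α) (q : Finset α → ℝ) (C T : Finset α) :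
    Disjoint U T → (∀ i ∈ T, ∀ B ⊆ U ∪ T, q (insert i B) = q B) →
      boxPoly x (U ∪ T) q C = (∏ p ∈ T, (1 + boxVertex x C p)) * boxPoly x U q C := by
  induction T using Finset.induction_on with
  | empty => simp
  | insert i T hi ih =>
    intro hd hq
    rw [Finset.disjoint_insert_right] at hd
    have hsub : U ∪ T ⊆ U ∪ insert i T :=
      Finset.union_subset_union_right (Finset.subset_insert _ _)
    have hi' : i ∉ U ∪ T := by simp [hd.1, hi]
    have h1 : boxPoly x (U ∪ T) (fun B => q (insert i B)) C = boxPoly x (U ∪ T) q C := by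
      refine Finset.sum_congr rfl fun B hB => ?_
      dsimp only
      rw [hq i (Finset.mem_insert_self _ _) B ((Finset.mem_powerset.1 hB).trans hsub)]
    rw [Finset.union_insert, boxPoly_insert hi', h1,
      ih hd.2 (fun j hj B hB => hq j (Finset.mem_insert_of_mem hj) B (hB.trans hsub)),
      Finset.prod_insert hi]
    ring

/-- If `h` vanishes at every vertex with `y_i = -1`, it is divisible by `1 + y_i`: its coefficients
do not see `i`. -/
lemma coeff_insert_eq {S : Finset α} (hx : ∀ p ∈ S, 1 < x p) {q : Finset α → ℝ} {i : α}
    (hi : i ∈ S) (h : ∀ C ⊆ S, i ∉ C → boxPoly x S q C = 0) :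
    ∀ B ⊆ S, q (insert i B) = q B := by
  intro B hB
  by_cases hiB : i ∈ B
  · rw [Finset.insert_eq_of_mem hiB]
  have key := boxPoly_ext (x := x) (S.erase i) (fun p hp => hx p (Finset.mem_of_mem_erase hp))
    (fun B => q B - q (insert i B)) ?_ B (Finset.subset_erase.2 ⟨hB, hiB⟩)
  · linarith
  · intro C hC
    have hC' := Finset.subset_erase.1 hC
    have h1 := h C hC'.1 hC'.2
    rw [← Finset.insert_erase hi, boxPoly_insert (Finset.notMem_erase _ _)] at h1
    simp only [boxVertex, hC'.2, if_false] at h1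
    rw [boxPoly_sub]
    linarith

lemma coeff_sdiff_eq {S : Finset α} {q : Finset α → ℝ} (T : Finset α)
    (h : ∀ i ∈ T, ∀ B ⊆ S, q (insert i B) = q B) : ∀ B ⊆ S, q (B \ T) = q B := by
  induction T using Finset.induction_on with
  | empty => simp
  | insert i T hi ih =>
    intro B hB
    rw [← ih (fun j hj => h j (Finset.mem_insert_of_mem hj)) B hB]
    have hs : (B \ T).erase i ⊆ S :=
      (Finset.erase_subset _ _).trans (Finset.sdiff_subset.trans hB)
    rw [Finset.sdiff_insert]
    by_cases hiB : i ∈ B \ T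
    · conv_rhs => rw [← Finset.insert_erase hiB]
      rw [h i (Finset.mem_insert_self _ _) _ hs]
    · rw [Finset.erase_eq_of_notMem hiB]

/-- The top vertex is the point `y = x`, where every monomial is at least `1`. -/
lemma one_le_monomial {S B : Finset α} (hx : ∀ p ∈ S, 1 < x p) (hB : B ⊆ S) :
    1 ≤ ∏ p ∈ B, boxVertex x S p := by
  rw [← Finset.prod_const_one (s := B)]
  refine Finset.prod_le_prod (fun _ _ => zero_le_one) fun p hp => ?_
  simp only [boxVertex, hB hp, if_true]
  exact (hx p (hB hp)).le

lemma one_lt_monomial {S B : Finset α} (hx : ∀ p ∈ S, 1 < x p) (hB : B ⊆ S) (hne : B.Nonempty) :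
    1 < ∏ p ∈ B, boxVertex x S p := by
  obtain ⟨i, hi⟩ := hne
  rw [← Finset.mul_prod_erase B _ hi]
  have h1 := one_le_monomial hx ((Finset.erase_subset i B).trans hB)
  have h2 : 1 < boxVertex x S i := by
    simp only [boxVertex, hB hi, if_true]
    exact hx i (hB hi)
  nlinarith

/-- The inductive step: `h` has coefficients in `{0, 1}`, and with `g = ∏_{T} (1 + y_i)` both
`g - h` and `g + t h` are non-negative on the vertices. Then `h` is `0` or `g`. -/
lemma coeff_dichotomy {S T : Finset α} (hx : ∀ p ∈ S, 1 < x p) (hT : T ⊆ S) {q : Finset α → ℝ}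
    (hq : ∀ B ⊆ S, q B = 0 ∨ q B = 1) {t : ℝ} (ht : 0 < t)
    (h1 : ∀ C ⊆ S, 0 ≤ ∏ p ∈ T, (1 + boxVertex x C p) - boxPoly x S q C)
    (h2 : ∀ C ⊆ S, 0 ≤ ∏ p ∈ T, (1 + boxVertex x C p) + t * boxPoly x S q C) :
    ∀ B ⊆ S, q B = if B ⊆ T then q ∅ else 0 := by
  have hins : ∀ i ∈ T, ∀ B ⊆ S, q (insert i B) = q B := by
    intro i hi
    refine coeff_insert_eq hx (hT hi) fun C hC hiC => ?_
    have h0 : ∏ p ∈ T, (1 + boxVertex x C p) = 0 :=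
      Finset.prod_eq_zero hi (by simp [boxVertex, hiC])
    have h1 := h1 C hC
    have h2 := h2 C hC
    rw [h0] at h1 h2
    rw [zero_add] at h2
    have := nonneg_of_mul_nonneg_right h2 ht
    linarith
  have hsd := coeff_sdiff_eq T hins
  have hST : S \ T ∪ T = S := Finset.sdiff_union_of_subset hT
  have hfac := boxPoly_factor (x := x) (S \ T) q S T Finset.sdiff_disjoint (by rwa [hST])
  rw [hST] at hfac
  have hpos : 0 < ∏ p ∈ T, (1 + boxVertex x S p) := by
    refine Finset.prod_pos fun p hp => ?_
    simp only [boxVertex, hT hp, if_true]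
    linarith [hx p (hT hp)]
  have hle : boxPoly x (S \ T) q S ≤ 1 := by
    have := h1 S (Finset.Subset.refl _)
    rw [hfac] at this
    by_contra! hlt
    nlinarith
  intro B hB
  rw [← hsd B hB]
  split_ifs with hBT
  · rw [Finset.sdiff_eq_empty_iff_subset.2 hBT]
  · have hne : (B \ T).Nonempty := Finset.sdiff_nonempty.2 hBT
    have hBS : B \ T ⊆ S := Finset.sdiff_subset.trans hB
    refine (hq _ hBS).resolve_right fun hq1 => ?_
    have h3 := one_lt_monomial hx hBS hne
    have h4 : q (B \ T) * ∏ p ∈ B \ T, boxVertex x S p ≤ boxPoly x (S \ T) q S := by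
      refine Finset.single_le_sum (f := fun B => q B * ∏ p ∈ B, boxVertex x S p) ?_
        (Finset.mem_powerset.2 (Finset.sdiff_subset_sdiff hB (Finset.Subset.refl _)))
      intro R hR
      have hRS : R ⊆ S := (Finset.mem_powerset.1 hR).trans Finset.sdiff_subset
      have h5 := one_le_monomial hx hRS
      rcases hq R hRS with h | h <;> simp only [h] <;> linarith
    rw [hq1] at h4
    linarith

/-- A nonzero multilinear polynomial with coefficients in `{0, 1}` that is non-negative on the
vertices of the box is `∏_{p ∈ T} (1 + y p)` for some `T`. -/
lemma exists_of_boxPoly_nonneg (S : Finset α) (hx : ∀ p ∈ S, 1 < x p) :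
    ∀ c : Finset α → ℝ, (∀ B ⊆ S, c B = 0 ∨ c B = 1) → (∃ B ⊆ S, c B ≠ 0) →
      (∀ C ⊆ S, 0 ≤ boxPoly x S c C) →
      ∃ T ⊆ S, ∀ B ⊆ S, c B = if B ⊆ T then 1 else 0 := by
  induction S using Finset.induction_on with
  | empty =>
    rintro c hc ⟨B, hB, hcB⟩ -
    refine ⟨∅, Finset.Subset.refl _, fun B' hB' => ?_⟩
    rw [if_pos hB', Finset.subset_empty.1 hB', ← Finset.subset_empty.1 hB]
    exact (hc B hB).resolve_left hcB
  | insert p S hp ih =>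
    rintro c hc ⟨B₀, hB₀, hcB₀⟩ hpos
    have hx' : ∀ i ∈ S, 1 < x i := fun i hi => hx i (Finset.mem_insert_of_mem hi)
    have hxp := hx p (Finset.mem_insert_self _ _)
    have hcg : ∀ B ⊆ S, c B = 0 ∨ c B = 1 := fun B hB => hc B (hB.trans (Finset.subset_insert _ _))
    have hch : ∀ B ⊆ S, c (insert p B) = 0 ∨ c (insert p B) = 1 :=
      fun B hB => hc _ (Finset.insert_subset_insert _ hB)
    have h1 : ∀ C ⊆ S, 0 ≤ boxPoly x S c C - boxPoly x S (fun B => c (insert p B)) C := by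
      intro C hC
      have hpC : p ∉ C := fun h => hp (hC h)
      have h := hpos C (hC.trans (Finset.subset_insert _ _))
      rw [boxPoly_insert hp] at h
      simp only [boxVertex, hpC, if_false] at h
      linarith
    have h2 : ∀ C ⊆ S, 0 ≤ boxPoly x S c C + x p * boxPoly x S (fun B => c (insert p B)) C := by
      intro C hC
      have h := hpos (insert p C) (Finset.insert_subset_insert _ hC)
      rw [boxPoly_insert hp, boxPoly_insert_vertex hp, boxPoly_insert_vertex hp] at h
      simpa only [boxVertex, Finset.mem_insert_self, if_true] using h
    have hg : ∀ C ⊆ S, 0 ≤ boxPoly x S c C := by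
      intro C hC
      have := h1 C hC
      have := h2 C hC
      by_contra! hlt
      nlinarith
    have hgne : ∃ B ⊆ S, c B ≠ 0 := by
      by_contra! hg0
      have hz : ∀ C, boxPoly x S c C = 0 := fun C =>
        Finset.sum_eq_zero fun B hB => by rw [hg0 B (Finset.mem_powerset.1 hB), zero_mul]
      have hh0 := boxPoly_ext S hx' (fun B => c (insert p B)) (fun C hC => by
        have h1 := h1 C hC
        have h2 := h2 C hC
        rw [hz] at h1 h2
        rw [zero_add] at h2
        have := nonneg_of_mul_nonneg_right h2 (by linarith)
        linarith)
      refine hcB₀ ?_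
      by_cases hpB : p ∈ B₀
      · simpa [Finset.insert_erase hpB] using hh0 (B₀.erase p) (Finset.subset_insert_iff.1 hB₀)
      · exact hg0 B₀ ((Finset.subset_insert_iff_of_notMem hpB).1 hB₀)
    obtain ⟨T, hT, hcT⟩ := ih hx' c hcg hgne hg
    have hpT : p ∉ T := fun h => hp (hT h)
    have hform := boxPoly_indicator (x := x) hT c hcT
    have hdich := coeff_dichotomy hx' hT hch (t := x p) (by linarith)
      (fun C hC => by rw [← hform]; exact h1 C hC) (fun C hC => by rw [← hform]; exact h2 C hC)
    have hsplit : ∀ B ⊆ insert p S, p ∈ B → ∃ R ⊆ S, p ∉ R ∧ B = insert p R := fun B hB hpB =>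
      ⟨B.erase p, Finset.subset_insert_iff.1 hB, Finset.notMem_erase _ _,
        (Finset.insert_erase hpB).symm⟩
    rcases hch ∅ (Finset.empty_subset _) with h0 | h0
    · refine ⟨T, hT.trans (Finset.subset_insert _ _), fun B hB => ?_⟩
      by_cases hpB : p ∈ B
      · rw [if_neg (fun h => hpT (h hpB))]
        obtain ⟨R, hR, -, rfl⟩ := hsplit B hB hpB
        have := hdich R hR
        simpa only [h0, ite_self] using this
      · exact hcT B ((Finset.subset_insert_iff_of_notMem hpB).1 hB)
    · refine ⟨insert p T, Finset.insert_subset_insert _ hT, fun B hB => ?_⟩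
      by_cases hpB : p ∈ B
      · obtain ⟨R, hR, hpR, rfl⟩ := hsplit B hB hpB
        have := hdich R hR
        simp only [h0] at this
        rw [this]
        exact if_congr (Finset.insert_subset_insert_iff hpR).symm rfl rfl
      · rw [hcT B ((Finset.subset_insert_iff_of_notMem hpB).1 hB)]
        exact if_congr (Finset.subset_insert_iff_of_notMem hpB).symm rfl rfl

lemma altSum_eq_boxPoly (S : Finset α) (w : α → ℝ) (E : Finset (Finset α))
    (hES : ∀ D ∈ E, D ⊆ S) (C : Finset α) (hC : C ⊆ S) :
    altSum S w E C =
      boxPoly (fun p => Real.exp (w p)) S (fun B => if S \ B ∈ E then 1 else 0) C := by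
  unfold altSum boxPoly
  simp only [ite_mul, one_mul, zero_mul]
  rw [← Finset.sum_filter, Finset.mul_sum]
  refine Finset.sum_bij' (fun D _ => S \ D) (fun B _ => S \ B) ?_ ?_ ?_ ?_ ?_
  · intro D hD
    simp [Finset.sdiff_sdiff_eq_self (hES D hD), hD]
  · intro B hB
    exact (Finset.mem_filter.1 hB).2
  · intro D hD
    exact Finset.sdiff_sdiff_eq_self (hES D hD)
  · intro B hB
    exact Finset.sdiff_sdiff_eq_self (Finset.mem_powerset.1 (Finset.mem_filter.1 hB).1)
  · intro D hD
    have hDS := hES D hD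
    simp only [boxVertex]
    rw [Finset.prod_ite, Finset.prod_const, ← Real.exp_sum]
    have e1 : (S \ D).filter (fun p => p ∈ C) = C \ D := by
      ext p
      simp only [Finset.mem_filter, Finset.mem_sdiff]
      have := @hC p
      tauto
    have e2 : (S \ D).filter (fun p => p ∉ C) = S \ (C ∪ D) := by
      ext p
      simp only [Finset.mem_filter, Finset.mem_sdiff, Finset.mem_union]
      tauto
    have e3 := Finset.card_sdiff_add_card_eq_card (Finset.union_subset hC hDS)
    have e4 : (-1 : ℝ) ^ (C ∪ D).card * (-1 : ℝ) ^ (C ∪ D).card = 1 := by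
      rw [← mul_pow]
      simp
    rw [e1, e2, ← e3, pow_add]
    linear_combination (-1 : ℝ) ^ (S \ (C ∪ D)).card * Real.exp (∑ p ∈ C \ D, w p) * e4

end

/-- **A combinatorial principle.** For a nonempty collection `E` of subsets of a finite set
`S` and a strictly positive weight `w`, all alternating sums `a_C(E)` are non-negative iff
`E` is a filter in `S`, i.e. `E = {D ⊆ S : A ⊆ D}` for some `A ⊆ S`. -/
theorem altSum_nonneg_iff_filter {α : Type*} [DecidableEq α]
    (S : Finset α) (w : α → ℝ) (hw : ∀ p ∈ S, 0 < w p)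
    (E : Finset (Finset α)) (hE : E.Nonempty) (hES : ∀ D ∈ E, D ⊆ S) :
    (∀ C ⊆ S, 0 ≤ altSum S w E C) ↔
      ∃ A ⊆ S, E = S.powerset.filter (fun D => A ⊆ D) := by
  have hx : ∀ p ∈ S, 1 < (fun p => Real.exp (w p)) p := fun p hp => Real.one_lt_exp_iff.2 (hw p hp)
  constructor
  · intro h
    obtain ⟨D₀, hD₀⟩ := hE
    obtain ⟨T, hT, hcT⟩ := exists_of_boxPoly_nonneg S hx
      (fun B => if S \ B ∈ E then 1 else 0)
      (fun B _ => by split_ifs <;> simp)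
      ⟨S \ D₀, Finset.sdiff_subset, by simp [Finset.sdiff_sdiff_eq_self (hES D₀ hD₀), hD₀]⟩
      (fun C hC => by rw [← altSum_eq_boxPoly S w E hES C hC]; exact h C hC)
    refine ⟨S \ T, Finset.sdiff_subset, ?_⟩
    ext D
    rw [Finset.mem_filter, Finset.mem_powerset]
    by_cases hDS : D ⊆ S
    · have h1 := hcT (S \ D) Finset.sdiff_subset
      simp only [Finset.sdiff_sdiff_eq_self hDS] at h1
      have h2 : D ∈ E ↔ S \ D ⊆ T := by
        split_ifs at h1 <;> simp_all
      rw [h2]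
      simp only [hDS, true_and]
      exact sdiff_le_comm
    · exact ⟨fun hD => absurd (hES D hD) hDS, fun hD => absurd hD.1 hDS⟩
  · rintro ⟨A, hA, rfl⟩ C hC
    rw [altSum_eq_boxPoly S w _ hES C hC, boxPoly_indicator (T := S \ A) Finset.sdiff_subset]
    · refine Finset.prod_nonneg fun p hp => ?_
      unfold boxVertex
      split_ifs
      · positivity
      · norm_num
    · intro B hB
      refine if_congr ?_ rfl rfl
      rw [Finset.mem_filter, Finset.mem_powerset, Finset.subset_sdiff, Finset.subset_sdiff]
      simp [hA, hB, disjoint_comm]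
end

section
/- Suppose E is the filter generated by A ⊆ S, i.e. E = {D ⊆ S : A ⊆ D}. Then for every C ⊆ S one has a_C(E) = exp(μ(S\A)) · Π_{p ∈ S\A} (1 + exp(−w(p))) if C ∪ A = S, and a_C(E) = 0 otherwise. -/
/-!
The alternating sum factorises over the points of `S \ A`. Put `g p = exp (w p)` for `p ∈ C` and
`g p = -1` otherwise. The members of the filter are `D = A ∪ T` with `T ⊆ S \ A`, and the term of
`D`, sign `(-1) ^ |S|` included, is `∏ p ∈ S \ D, g p` (`term_eq_prod`). Expanding the product
shows `a_C(E) = ∏ p ∈ S \ A, (1 + g p)` (`altSum_filter_eq_prod`). A point of `S \ A` outside `C`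
contributes a zero factor; if there is none, then every factor is
`1 + exp (w p) = exp (w p) * (1 + exp (-w p))`.
-/

open Finset

/-- Points of `S \ D` in `C` make up `C \ D`, and those outside `C` make up `S \ (C ∪ D)`, whose
parity is that of `|S| + |C ∪ D|`. -/
lemma term_eq_prod {α : Type*} [DecidableEq α] (S : Finset α) (w : α → ℝ)
    (C D : Finset α) (hC : C ⊆ S) (hD : D ⊆ S) :
    (-1 : ℝ) ^ S.card * ((-1 : ℝ) ^ (C ∪ D).card * Real.exp (∑ p ∈ C \ D, w p)) =
      ∏ p ∈ S \ D, (if p ∈ C then Real.exp (w p) else -1) := by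
  have h1 : (S \ D).filter (fun p => p ∈ C) = C \ D := by
    ext p
    have := @hC p
    simp only [mem_filter, mem_sdiff]
    tauto
  have h2 : (S \ D).filter (fun p => p ∉ C) = S \ (C ∪ D) := by
    ext p
    simp only [mem_filter, mem_sdiff, mem_union]
    tauto
  rw [prod_ite, h1, h2, prod_const, ← Real.exp_sum,
    ← card_sdiff_add_card_eq_card (union_subset hC hD), pow_add]
  have h3 : (-1 : ℝ) ^ (C ∪ D).card * (-1 : ℝ) ^ (C ∪ D).card = 1 := by
    rw [← mul_pow]
    norm_num
  linear_combination (-1 : ℝ) ^ (S \ (C ∪ D)).card * Real.exp (∑ p ∈ C \ D, w p) * h3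

lemma altSum_filter_eq_prod {α : Type*} [DecidableEq α] (S : Finset α) (w : α → ℝ)
    (A C : Finset α) (hA : A ⊆ S) (hC : C ⊆ S) :
    altSum S w (S.powerset.filter (fun D => A ⊆ D)) C =
      ∏ p ∈ S \ A, (1 + if p ∈ C then Real.exp (w p) else -1) := by
  rw [altSum, mul_sum, prod_add]
  refine sum_nbij' (fun D => D \ A) (fun T => A ∪ T) ?_ ?_ ?_ ?_ ?_
  · intro D hD
    simp only [mem_filter, mem_powerset] at hD ⊢
    exact sdiff_subset_sdiff hD.1 le_rfl
  · intro T hT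
    simp only [mem_filter, mem_powerset] at hT ⊢
    exact ⟨union_subset hA (hT.trans sdiff_subset), subset_union_left⟩
  · intro D hD
    simp only [mem_filter, mem_powerset] at hD
    exact union_sdiff_of_subset hD.2
  · intro T hT
    rw [mem_powerset] at hT
    exact union_sdiff_cancel_left (disjoint_sdiff.mono_right hT)
  · intro D hD
    simp only [mem_filter, mem_powerset] at hD
    have h : (S \ A) \ (D \ A) = S \ D := by
      ext p
      have := @hD.2 p
      simp only [mem_sdiff]
      tauto
    rw [term_eq_prod S w C D hC hD.1, h, prod_const_one, one_mul]

/-- Values of the alternating sums for a filter: if `E = {D ⊆ S : A ⊆ D}` then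
`a_C(E) = exp(μ(S \ A)) ∏_{p ∈ S \ A} (1 + exp(−w p))` if `C ∪ A = S`, and `0` otherwise. -/
theorem altSum_of_filter {α : Type*} [DecidableEq α]
    (S : Finset α) (w : α → ℝ) (hw : ∀ p ∈ S, 0 < w p)
    (A : Finset α) (hA : A ⊆ S) (C : Finset α) (hC : C ⊆ S) :
    altSum S w (S.powerset.filter (fun D => A ⊆ D)) C =
      if C ∪ A = S then
        Real.exp (∑ p ∈ S \ A, w p) * ∏ p ∈ S \ A, (1 + Real.exp (-(w p)))
      else 0 := by
  rw [altSum_filter_eq_prod S w A C hA hC]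
  split_ifs with h
  · rw [Real.exp_sum, ← prod_mul_distrib]
    refine prod_congr rfl fun p hp => ?_
    rw [mem_sdiff, ← h, mem_union] at hp
    rw [if_pos (hp.1.resolve_right hp.2), mul_add, ← Real.exp_add]
    simp [add_comm]
  · obtain ⟨p, hpS, hp⟩ : ∃ p ∈ S, p ∉ C ∪ A := by
      by_contra! hall
      exact h (Subset.antisymm (union_subset hC hA) hall)
    rw [mem_union, not_or] at hp
    refine prod_eq_zero (mem_sdiff.2 ⟨hpS, hp.2⟩) ?_
    rw [if_neg hp.1]
    norm_num
end

section
/- Assume |S| > 1 and let E = {D ⊆ S : A ⊆ D} be a filter generated by a nonempty set A ⊆ S (so E ≠ P(S), the full power set). Then for the modified collection Ẽ = E ∪ {∅} there exists C ⊆ S with a_C(Ẽ) < 0. -/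
/-!
The witness is `C = S \ {p}` for a suitable `p ∈ S`. The set `∅` contributes
`(-1)^{|S|} (-1)^{|S|-1} exp(μ(C)) = -exp(μ(C))` to `a_C`.

If `A ≠ S`, take `p ∈ S \ A`. Toggling `p` in `D` preserves the filter and `C \ D` but flips the
parity of `|C ∪ D|`, so the filter contributes `0` and `a_C = -exp(μ(C)) < 0`.

If `A = S`, the filter is `{S}`, which contributes `1`; hence `a_C = 1 - exp(μ(C))`, which is
negative because `|S| > 1` makes `C` nonempty and so `μ(C) > 0`.
-/

open Finset

/-- The contribution of the adjoined `∅` at `C = S \ {p}` splits off as `-exp(μ(C))`. -/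
lemma altSum_insert_empty_erase {α : Type*} [DecidableEq α] (S : Finset α) (w : α → ℝ)
    (E : Finset (Finset α)) (hE : ∅ ∉ E) {p : α} (hp : p ∈ S) :
    altSum S w (insert ∅ E) (S.erase p) =
      -Real.exp (∑ q ∈ S.erase p, w q) + altSum S w E (S.erase p) := by
  unfold altSum
  rw [Finset.sum_insert hE, mul_add, Finset.union_empty, Finset.sdiff_empty, ← mul_assoc,
    ← Finset.card_erase_add_one hp, pow_succ]
  have h : (-1 : ℝ) ^ (S.erase p).card * (-1 : ℝ) ^ (S.erase p).card = 1 := by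
    rw [← mul_pow]; simp
  linear_combination (-Real.exp (∑ q ∈ S.erase p, w q)) * h

/-- The involution toggling `p` in `D` cancels the terms of the filter sum in pairs. -/
lemma altSum_filter_erase_eq_zero {α : Type*} [DecidableEq α] (S : Finset α) (w : α → ℝ)
    (A : Finset α) {p : α} (hp : p ∈ S) (hpA : p ∉ A) :
    altSum S w (S.powerset.filter (fun D => A ⊆ D)) (S.erase p) = 0 := by
  unfold altSum
  -- `C ∪ D` is `S` or `S \ {p}` according to whether `p ∈ D`.
  have hin : ∀ D ⊆ S, p ∈ D → S.erase p ∪ D = S := by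
    intro D hD hpD
    ext x; by_cases hx : x = p <;> grind
  have hout : ∀ D ⊆ S, p ∉ D → S.erase p ∪ D = S.erase p := by
    intro D hD hpD
    grind
  have hcard := Finset.card_erase_add_one hp
  rw [Finset.sum_involution (fun D _ => if p ∈ D then D.erase p else insert p D), mul_zero]
  · intro D hD
    simp only [Finset.mem_filter, Finset.mem_powerset] at hD
    by_cases hpD : p ∈ D
    · have hs : S.erase p \ D.erase p = S.erase p \ D := by grind
      rw [if_pos hpD, hin D hD.1 hpD, hout _ ((Finset.erase_subset _ _).trans hD.1) (by simp), hs,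
        ← hcard, pow_succ]
      ring
    · have hs : S.erase p \ insert p D = S.erase p \ D := by grind
      rw [if_neg hpD, hout D hD.1 hpD, hin _ (Finset.insert_subset hp hD.1) (by simp), hs,
        ← hcard, pow_succ]
      ring
  · intro D _ _
    grind
  · intro D hD
    simp only [Finset.mem_filter, Finset.mem_powerset] at hD ⊢
    grind
  · intro D _
    grind

/-- If `|S| > 1` and `E` is the filter generated by a nonempty `A ⊆ S` (so `E ≠ P(S)`), then
adjoining the empty set to `E` produces a negative alternating sum `a_C` for some `C ⊆ S`. -/
theorem altSum_neg_of_filter_union_empty {α : Type*} [DecidableEq α]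
    (S : Finset α) (hS : 1 < S.card) (w : α → ℝ) (hw : ∀ p ∈ S, 0 < w p)
    (A : Finset α) (hA : A ⊆ S) (hAne : A.Nonempty) :
    ∃ C ⊆ S, altSum S w (insert ∅ (S.powerset.filter (fun D => A ⊆ D))) C < 0 := by
  have hE : ∅ ∉ S.powerset.filter (fun D => A ⊆ D) := by
    simp [Finset.subset_empty, hAne.ne_empty]
  by_cases hAS : A = S
  · subst hAS
    obtain ⟨p, hp⟩ := hAne
    refine ⟨A.erase p, Finset.erase_subset _ _, ?_⟩
    rw [altSum_insert_empty_erase A w _ hE hp]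
    have hf : A.powerset.filter (fun D => A ⊆ D) = {A} := by
      ext D
      simp only [Finset.mem_filter, Finset.mem_powerset, Finset.mem_singleton]
      exact ⟨fun h => h.1.antisymm h.2, fun h => h ▸ ⟨subset_rfl, subset_rfl⟩⟩
    have h1 : altSum A w {A} (A.erase p) = 1 := by
      unfold altSum
      rw [Finset.sum_singleton, Finset.union_eq_right.2 (Finset.erase_subset _ _),
        Finset.sdiff_eq_empty_iff_subset.2 (Finset.erase_subset _ _), Finset.sum_empty,
        Real.exp_zero, mul_one, ← mul_pow]
      simp
    have hpos : 0 < ∑ q ∈ A.erase p, w q := by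
      refine Finset.sum_pos (fun q hq => hw q (Finset.mem_of_mem_erase hq)) ?_
      rw [← Finset.card_pos, Finset.card_erase_of_mem hp]
      omega
    have := Real.one_lt_exp_iff.2 hpos
    rw [hf, h1]
    linarith
  · obtain ⟨p, hp, hpA⟩ := Finset.exists_of_ssubset (hA.ssubset_of_ne hAS)
    refine ⟨S.erase p, Finset.erase_subset _ _, ?_⟩
    rw [altSum_insert_empty_erase S w _ hE hp, altSum_filter_erase_eq_zero S w A hp hpA, add_zero]
    exact neg_lt_zero.2 (Real.exp_pos _)
end

section
/- Assume |S| > 1 and let Ẽ = P(S) \ {∅} be the collection of all nonempty subsets of S. Then there exists C ⊆ S with a_C(Ẽ) < 0. -/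
/-!
If `C` misses some `a ∈ S`, toggling membership of `a` in `D` flips the sign of `(-1)^|C ∪ D|` and
leaves `C \ D` unchanged, so the alternating sum over the full power set vanishes. Removing `D = ∅`
therefore leaves `a_C(Ẽ) = -(-1)^{|S| + |C|} exp (μ C)`, which is negative as soon as
`|C| ≡ |S|` mod 2. Since `|S| > 1`, one may take `C` to be `S` with two elements removed.
-/

open Finset

theorem altSum_powerset_eq_zero {α : Type*} [DecidableEq α] {S C : Finset α} (w : α → ℝ)
    {a : α} (haS : a ∈ S) (haC : a ∉ C) :
    ∑ D ∈ S.powerset, (-1 : ℝ) ^ (C ∪ D).card * Real.exp (∑ p ∈ C \ D, w p) = 0 := by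
  rw [← insert_erase haS, sum_powerset_insert (notMem_erase a S), ← sum_add_distrib]
  refine sum_eq_zero fun D hD => ?_
  have haD : a ∉ D := fun h => notMem_erase a S (mem_powerset.1 hD h)
  have hsdiff : C \ insert a D = C \ D := by
    rw [sdiff_insert, erase_eq_of_notMem (by simp [haC])]
  rw [hsdiff, union_insert, card_insert_of_notMem (by simp [haC, haD]), pow_succ]
  ring

/-- If `|S| > 1` and `Ẽ = P(S) \ {∅}` is the collection of all nonempty subsets of `S`,
then some alternating sum `a_C(Ẽ)` is negative. -/
theorem altSum_neg_of_powerset_erase_empty {α : Type*} [DecidableEq α]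
    (S : Finset α) (hS : 1 < S.card) (w : α → ℝ) (hw : ∀ p ∈ S, 0 < w p) :
    ∃ C ⊆ S, altSum S w (S.powerset.erase ∅) C < 0 := by
  obtain ⟨a, ha, b, hb, hab⟩ := one_lt_card.1 hS
  have hb' : b ∈ S.erase a := mem_erase.2 ⟨hab.symm, hb⟩
  have hC : (S.erase a).erase b ⊆ S := (erase_subset _ _).trans (erase_subset _ _)
  refine ⟨(S.erase a).erase b, hC, ?_⟩
  have hcard : S.card = ((S.erase a).erase b).card + 2 := by
    rw [← card_erase_add_one ha, ← card_erase_add_one hb']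
  have h0 := altSum_powerset_eq_zero (C := (S.erase a).erase b) w ha (by simp)
  rw [← add_sum_erase _ _ (empty_mem_powerset S), union_empty, sdiff_empty] at h0
  rw [altSum, eq_neg_of_add_eq_zero_right h0, hcard, mul_neg, ← mul_assoc, ← pow_add,
    Even.neg_one_pow ⟨((S.erase a).erase b).card + 1, by ring⟩, one_mul]
  exact neg_neg_of_pos (Real.exp_pos _)
end

section
/- For every p ∈ S and every C ⊆ S \ {p} one has a_C^p(E_p) = (exp(w(p))·a_C(E) + a_{C∪{p}}(E)) / (1 + exp(w(p))). In particular, if a_C(E) ≥ 0 for all C ⊆ S, then a_C^p(E_p) ≥ 0 for all C ⊆ S \ {p}. -/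
/-!
Write `t(C, D) = (−1)^{|C ∪ D|} exp(μ(C \ D))` and compare `exp(w p) · a_C(E) + a_{C ∪ {p}}(E)`
with `a_C^p(E_p)` one `D ∈ E` at a time, for `p ∉ C`. If `p ∉ D`, adding `p` to `C` flips the sign
of `t(C, D)` and multiplies it by `exp(w p)`, so the two contributions cancel. If `p ∈ D`, adding
`p` to `C` changes nothing, and passing from `D` to `D \ {p}` only flips the sign, which is
absorbed by the change from `(−1)^{|S|}` to `(−1)^{|S|−1}`. This is `term_combination`; the sums
match since `D ↦ D \ {p}` is injective on the `D` containing `p`. Nonnegativity is immediate from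
the identity.
-/

open Finset

/-- The reduced collection `E_p = {D \ {p} : D ∈ E, p ∈ D}` of subsets of `S \ {p}`. -/
def reducedColl {α : Type*} [DecidableEq α] (E : Finset (Finset α)) (p : α) :
    Finset (Finset α) :=
  (E.filter (fun D => p ∈ D)).image (fun D => D.erase p)

/-- The alternating sum `a_C^p(E_p) = (−1)^{|S|−1} ∑_{D ∈ E_p} (−1)^{|C ∪ D|} exp(μ(C \ D))`
for the reduced collection `E_p` on `S \ {p}`. -/
noncomputable def altSumRed {α : Type*} [DecidableEq α] (S : Finset α) (w : α → ℝ)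
    (E : Finset (Finset α)) (p : α) (C : Finset α) : ℝ :=
  (-1 : ℝ) ^ (S.card - 1) *
    ∑ D ∈ reducedColl E p, (-1 : ℝ) ^ (C ∪ D).card * Real.exp (∑ q ∈ C \ D, w q)

theorem term_combination {α : Type*} [DecidableEq α] (w : α → ℝ) {p : α} {C : Finset α}
    (hpC : p ∉ C) (D : Finset α) :
    Real.exp (w p) * ((-1 : ℝ) ^ (C ∪ D).card * Real.exp (∑ q ∈ C \ D, w q)) +
        (-1 : ℝ) ^ (insert p C ∪ D).card * Real.exp (∑ q ∈ insert p C \ D, w q) =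
      if p ∈ D then
        -(1 + Real.exp (w p)) *
          ((-1 : ℝ) ^ (C ∪ D.erase p).card * Real.exp (∑ q ∈ C \ D.erase p, w q))
      else 0 := by
  split_ifs with hpD
  · have h1 : insert p C ∪ D = C ∪ D := by grind
    have h2 : insert p C \ D = C \ D := by grind
    have h3 : C \ D.erase p = C \ D := by grind
    have h4 : C ∪ D = insert p (C ∪ D.erase p) := by grind
    have h5 : p ∉ C ∪ D.erase p := by grind
    rw [h1, h2, h3, h4, card_insert_of_notMem h5, pow_succ]
    ring
  · have h1 : insert p C \ D = insert p (C \ D) := by grind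
    have h2 : p ∉ C \ D := by grind
    have h3 : p ∉ C ∪ D := by grind
    rw [h1, sum_insert h2, insert_union, card_insert_of_notMem h3, pow_succ, Real.exp_add]
    ring

theorem sum_reducedColl {α : Type*} [DecidableEq α] (E : Finset (Finset α)) (p : α)
    (f : Finset α → ℝ) :
    ∑ D ∈ reducedColl E p, f D = ∑ D ∈ E, if p ∈ D then f (D.erase p) else 0 := by
  rw [reducedColl, sum_image, sum_filter]
  intro D hD D' hD' h
  rw [← insert_erase (mem_filter.1 hD).2, ← insert_erase (mem_filter.1 hD').2]
  exact congrArg (insert p) h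

theorem altSumRed_mul {α : Type*} [DecidableEq α] (S : Finset α) (w : α → ℝ)
    (E : Finset (Finset α)) {p : α} (hp : p ∈ S) {C : Finset α} (hpC : p ∉ C) :
    altSumRed S w E p C * (1 + Real.exp (w p)) =
      Real.exp (w p) * altSum S w E C + altSum S w E (insert p C) := by
  have hcard : S.card = (S.card - 1) + 1 := by
    have := card_pos.2 ⟨p, hp⟩
    omega
  have key : Real.exp (w p) * altSum S w E C + altSum S w E (insert p C) =
      (-1 : ℝ) ^ S.card * ∑ D ∈ E,
        (Real.exp (w p) * ((-1 : ℝ) ^ (C ∪ D).card * Real.exp (∑ q ∈ C \ D, w q)) +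
          (-1 : ℝ) ^ (insert p C ∪ D).card * Real.exp (∑ q ∈ insert p C \ D, w q)) := by
    rw [sum_add_distrib, ← mul_sum, altSum, altSum]
    ring
  rw [key, sum_congr rfl fun D _ => term_combination w hpC D,
    ← sum_reducedColl E p fun D =>
      -(1 + Real.exp (w p)) * ((-1 : ℝ) ^ (C ∪ D).card * Real.exp (∑ q ∈ C \ D, w q)),
    ← mul_sum, altSumRed, hcard, pow_succ, Nat.add_sub_cancel]
  ring

/-- For every `p ∈ S` and every `C ⊆ S \ {p}` one has
`a_C^p(E_p) = (exp(w p) · a_C(E) + a_{C ∪ {p}}(E)) / (1 + exp(w p))`.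
In particular, if `a_C(E) ≥ 0` for all `C ⊆ S` then `a_C^p(E_p) ≥ 0` for all `C ⊆ S \ {p}`. -/
theorem altSumRed_eq_and_nonneg {α : Type*} [DecidableEq α]
    (S : Finset α) (w : α → ℝ) (hw : ∀ p ∈ S, 0 < w p)
    (E : Finset (Finset α)) (hES : ∀ D ∈ E, D ⊆ S) (p : α) (hp : p ∈ S) :
    (∀ C ⊆ S.erase p,
      altSumRed S w E p C =
        (Real.exp (w p) * altSum S w E C + altSum S w E (insert p C)) /
          (1 + Real.exp (w p))) ∧
    ((∀ C ⊆ S, 0 ≤ altSum S w E C) → ∀ C ⊆ S.erase p, 0 ≤ altSumRed S w E p C) := by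
  have formula : ∀ C ⊆ S.erase p,
      altSumRed S w E p C =
        (Real.exp (w p) * altSum S w E C + altSum S w E (insert p C)) /
          (1 + Real.exp (w p)) := by
    intro C hC
    have hpC : p ∉ C := fun h => notMem_erase p S (hC h)
    rw [eq_div_iff (by positivity)]
    exact altSumRed_mul S w E hp hpC
  refine ⟨formula, fun h C hC => ?_⟩
  have hCS : C ⊆ S := hC.trans (erase_subset p S)
  have h1 := h C hCS
  have h2 := h (insert p C) (insert_subset hp hCS)
  rw [formula C hC]
  positivity
end

section
/- Let E be a collection of subsets of a finite set S such that for every p ∈ S there exists D ∈ E with p ∈ D, and such that for every p ∈ S the collection E_p = {D \ {p} : D ∈ E, p ∈ D} is a filter in S \ {p}, say generated by A_p ⊆ S \ {p}. Then either there exists p ∈ S with p ∈ A_q for all q ≠ p, or A_p = ∅ for all p ∈ S. In the first case, E equals the filter in S generated by {p} ∪ A_p, or this filter together with the empty set. In the second case, E = P(S) or E = P(S) \ {∅}. -/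
/-!
For `p ∈ D ⊆ S` the hypothesis says `D ∈ E ↔ A p ⊆ D`. Testing `D = {p, q} ∪ A p` through both
`p` and `q` gives `A q ⊆ {p} ∪ A p`. Hence if some `r` lies in some `A q`, then `r ∈ A s` for all
`s ≠ r`; every nonempty member of `E` then contains `r`, so `E` is determined, up to `∅`, by the
membership criterion at `r`. If no such `r` exists, every `A p` is empty and the criterion
puts every nonempty subset of `S` in `E`.
-/

open Finset

/-- For sets containing `p`, membership in `E` can be read off from the generator of `E_p`, since
`D ↦ D \ {p}` is injective on such sets. -/
theorem mem_iff_of_reducedColl_eq {α : Type*} [DecidableEq α]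
    {S : Finset α} {E : Finset (Finset α)} {A : Finset α} {p : α} (hA : A ⊆ S.erase p)
    (h : reducedColl E p = (S.erase p).powerset.filter (fun D => A ⊆ D))
    {D : Finset α} (hD : D ⊆ S) (hp : p ∈ D) : D ∈ E ↔ A ⊆ D := by
  have h1 : D.erase p ∈ reducedColl E p ↔ D ∈ E := by
    simp only [reducedColl, mem_image, mem_filter]
    constructor
    · rintro ⟨D', ⟨hD', hp'⟩, he⟩
      rwa [← insert_erase hp, ← he, insert_erase hp']
    · exact fun h => ⟨D, ⟨h, hp⟩, rfl⟩
  rw [← h1, h, mem_filter, mem_powerset]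
  constructor
  · exact fun h => h.2.trans (erase_subset _ _)
  · exact fun h => ⟨erase_subset_erase p hD,
      fun x hx => mem_erase.2 ⟨(mem_erase.1 (hA hx)).1, h hx⟩⟩

/-- Suppose every `p ∈ S` lies in some member of `E` and every reduced collection
`E_p` is a filter in `S \ {p}` generated by `A_p ⊆ S \ {p}`. Then either there exists
`p ∈ S` with `p ∈ A_q` for all `q ≠ p`, in which case `E` is the filter in `S` generated
by `{p} ∪ A_p` or this filter together with `∅`; or `A_p = ∅` for all `p ∈ S`, in which
case `E = P(S)` or `E = P(S) \ {∅}`. -/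
theorem filter_of_reductions_filters {α : Type*} [DecidableEq α]
    (S : Finset α) (E : Finset (Finset α)) (hES : ∀ D ∈ E, D ⊆ S)
    (hcover : ∀ p ∈ S, ∃ D ∈ E, p ∈ D)
    (A : α → Finset α) (hA : ∀ p ∈ S, A p ⊆ S.erase p)
    (hfilter : ∀ p ∈ S,
      reducedColl E p = (S.erase p).powerset.filter (fun D => A p ⊆ D)) :
    (∃ p ∈ S, (∀ q ∈ S, q ≠ p → p ∈ A q) ∧
      (E = S.powerset.filter (fun D => insert p (A p) ⊆ D) ∨
        E = insert ∅ (S.powerset.filter (fun D => insert p (A p) ⊆ D)))) ∨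
    ((∀ p ∈ S, A p = ∅) ∧ (E = S.powerset ∨ E = S.powerset.erase ∅)) := by
  have key : ∀ p ∈ S, ∀ D, D ⊆ S → p ∈ D → (D ∈ E ↔ A p ⊆ D) := fun p hp D hD hpD =>
    mem_iff_of_reducedColl_eq (hA p hp) (hfilter p hp) hD hpD
  -- `{p, q} ∪ A p` is in `E` by the criterion at `p`, so it contains `A q`.
  have hsub : ∀ p ∈ S, ∀ q ∈ S, ∀ r ∈ A q, r ≠ p → r ∈ A p := by
    intro p hp q hq r hr hrp
    have hD : insert p (insert q (A p)) ⊆ S :=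
      insert_subset hp (insert_subset hq ((hA p hp).trans (erase_subset _ _)))
    have hE := (key p hp _ hD (by simp)).2 (fun x hx => by simp [hx])
    have hr' := (key q hq _ hD (by simp)).1 hE hr
    have hrq : r ≠ q := (mem_erase.1 (hA q hq hr)).1
    simpa [hrp, hrq] using hr'
  by_cases hall : ∀ p ∈ S, A p = ∅
  · right
    refine ⟨hall, ?_⟩
    have hE : ∀ D, D ≠ ∅ → (D ∈ E ↔ D ⊆ S) := by
      intro D hne
      obtain ⟨p, hp⟩ := nonempty_iff_ne_empty.2 hne
      refine ⟨hES D, fun hD => (key p (hD hp) D hD hp).2 ?_⟩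
      simp [hall p (hD hp)]
    by_cases h0 : ∅ ∈ E
    · left
      ext D
      by_cases hD : D = ∅
      · simp [hD, h0]
      · simp [hE D hD]
    · right
      ext D
      by_cases hD : D = ∅
      · simp [hD, h0]
      · simp [hE D hD, hD]
  · left
    push Not at hall
    obtain ⟨q, hq, hne⟩ := hall
    obtain ⟨r, hr⟩ := hne
    have hrS : r ∈ S := (mem_erase.1 (hA q hq hr)).2
    have hmem : ∀ s ∈ S, s ≠ r → r ∈ A s := fun s hs hsr => hsub s hs q hq r hr hsr.symm
    refine ⟨r, hrS, hmem, ?_⟩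
    have hE : ∀ D, D ≠ ∅ → (D ∈ E ↔ D ⊆ S ∧ insert r (A r) ⊆ D) := by
      intro D hne
      constructor
      · intro hD
        have hDS := hES D hD
        obtain ⟨s, hs⟩ := nonempty_iff_ne_empty.2 hne
        have hrD : r ∈ D := by
          by_cases hsr : s = r
          · exact hsr ▸ hs
          · exact (key s (hDS hs) D hDS hs).1 hD (hmem s (hDS hs) hsr)
        exact ⟨hDS, insert_subset hrD ((key r hrS D hDS hrD).1 hD)⟩
      · rintro ⟨hDS, hi⟩
        rw [insert_subset_iff] at hi
        exact (key r hrS D hDS hi.1).2 hi.2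
    by_cases h0 : ∅ ∈ E
    · right
      ext D
      by_cases hD : D = ∅
      · simp [hD, h0]
      · rw [hE D hD, mem_insert, mem_filter, mem_powerset]
        simp [hD]
    · left
      ext D
      by_cases hD : D = ∅
      · simp [hD, h0]
      · rw [hE D hD, mem_filter, mem_powerset]
end

section
/- Let U be a finite set of complex roots of unity such that Σ_{ζ∈U} ζ^k is an integer for every positive integer k. Then the polynomial p(X) = Π_{ζ∈U} (X − ζ) has integer coefficients. -/
/-!
By Newton's identities, `k • e_k` is an integral polynomial in the `e_i` with `i < k` and the
power sums `p_j` with `1 ≤ j ≤ k`. Dividing by `k`, induction shows that the elementary symmetric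
functions of `U`, hence by Vieta the coefficients of `∏ (X - ζ)`, are rational
(`esymm_mem_of_psum_mem`). They are also algebraic integers, being polynomial expressions
in roots of unity. A rational algebraic integer is an integer, as `ℤ` is integrally closed.
-/

open Polynomial

/-- If the power sums of positive index lie in a subfield of a field of characteristic zero, so do
the elementary symmetric functions. -/
lemma esymm_mem_of_psum_mem {L σ : Type*} [Field L] [CharZero L] [Fintype σ]
    (K : Subfield L) (x : σ → L) (h : ∀ k : ℕ, 0 < k → ∑ i, x i ^ k ∈ K) (k : ℕ) :
    MvPolynomial.aeval x (MvPolynomial.esymm σ ℤ k) ∈ K := by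
  classical
  induction k using Nat.strong_induction_on with
  | _ k ih =>
    rcases Nat.eq_zero_or_pos k with rfl | hk
    · simp
    have newton := congrArg (MvPolynomial.aeval x) (MvPolynomial.mul_esymm_eq_sum σ ℤ k)
    simp only [map_mul, map_sum, map_pow, map_neg, map_one, map_natCast] at newton
    have hk0 : (k : L) ≠ 0 := by exact_mod_cast hk.ne'
    rw [← eq_inv_mul_iff_mul_eq₀ hk0] at newton
    rw [newton]
    have hneg : (-1 : L) ∈ K := K.neg_mem K.one_mem
    refine K.mul_mem (K.inv_mem (natCast_mem K k)) (K.mul_mem (pow_mem hneg _) (sum_mem ?_))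
    intro a hmem
    obtain ⟨hsum, hlt⟩ := Finset.mem_filter.mp hmem
    rw [Finset.HasAntidiagonal.mem_antidiagonal] at hsum
    refine K.mul_mem (K.mul_mem (pow_mem hneg _) (ih _ hlt)) ?_
    simpa [MvPolynomial.psum] using h a.2 (by omega)

/-- If `U` is a finite set of complex roots of unity all of whose power sums
`∑ ζ ∈ U, ζ ^ k` (for `k ≥ 1`) are integers, then the polynomial `∏ ζ ∈ U, (X − ζ)` has
integer coefficients. -/
theorem prod_X_sub_C_int_coeffs
    (U : Finset ℂ) (hroots : ∀ ζ ∈ U, ∃ m : ℕ, 0 < m ∧ ζ ^ m = 1)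
    (ha : ∀ k : ℕ, 0 < k → ∃ a : ℤ, (∑ ζ ∈ U, ζ ^ k) = (a : ℂ)) :
    ∀ n : ℕ, ∃ z : ℤ, (∏ ζ ∈ U, (X - C ζ)).coeff n = (z : ℂ) := by
  intro n
  have hint : IsIntegral ℤ ((∏ ζ ∈ U, (X - C ζ)).coeff n) := by
    refine isIntegral_coeff_prod U _ (fun ζ hζ j => ?_) n
    obtain ⟨m, hm, hζm⟩ := hroots ζ hζ
    have hζint : IsIntegral ℤ ζ := IsIntegral.of_pow hm (hζm ▸ isIntegral_one)
    rw [coeff_sub, coeff_X, coeff_C]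
    refine IsIntegral.sub ?_ ?_
    · split_ifs
      exacts [isIntegral_one, isIntegral_zero]
    · split_ifs
      exacts [hζint, isIntegral_zero]
  have hrat : (∏ ζ ∈ U, (X - C ζ)).coeff n ∈ (algebraMap ℚ ℂ).fieldRange := by
    rcases le_or_gt n U.card with hn | hn
    · have hesymm := esymm_mem_of_psum_mem (algebraMap ℚ ℂ).fieldRange (fun i : U => (i : ℂ))
        (fun k hk => by
          obtain ⟨a, hak⟩ := ha k hk
          rw [Finset.sum_coe_sort U (fun ζ => ζ ^ k), hak]
          exact intCast_mem _ a) (U.card - n)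
      rw [MvPolynomial.aeval_esymm_eq_multiset_esymm] at hesymm
      have hval : (Finset.univ : Finset U).val.map (fun i : U => (i : ℂ)) = U.val :=
        Multiset.attach_map_val U.val
      rw [hval] at hesymm
      have hvieta := Multiset.prod_X_sub_C_coeff U.val (k := n) hn
      rw [Finset.prod, hvieta]
      exact mul_mem (pow_mem (neg_mem (one_mem _)) _) hesymm
    · rw [coeff_eq_zero_of_natDegree_lt (by simpa using hn)]
      exact zero_mem _
  obtain ⟨q, hq⟩ := hrat
  rw [← hq, isIntegral_algebraMap_iff (algebraMap ℚ ℂ).injective,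
    IsIntegrallyClosed.isIntegral_iff] at hint
  obtain ⟨z, rfl⟩ := hint
  exact ⟨z, by simp [← hq]⟩
end

section
/- Let N be a positive integer, ξ = exp(2πi/N) a primitive N-th root of unity, and let d and c be positive divisors of N. Then Σ_{i=1,...,N with gcd(i,N)=d} ξ^{ic} = (φ(N/d) / φ(N/gcd(N,dc))) · μ(N/gcd(N,dc)), where φ is Euler's totient function and μ is the Möbius function. -/
open Finset

/-!
The powers `ξ ^ i` with `1 ≤ i ≤ N` and `gcd i N = d` are exactly the primitive `n`-th roots of
unity for `n = N / d`, each occurring once, so the sum is `∑ ζ ^ c` over these roots `ζ`.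

Put `m = n / gcd n c = N / gcd N (d * c)`. Fixing one primitive `n`-th root `ζ` identifies the
primitive `n`-th roots with `(ℤ/n)ˣ`, via `u ↦ ζ ^ u`. Since `ζ ^ c` is a primitive `m`-th root,
`(ζ ^ c) ^ u` depends only on the image of `u` in `(ℤ/m)ˣ`. The reduction `(ℤ/n)ˣ → (ℤ/m)ˣ` is a
surjective homomorphism, so all its fibres have `φ(n) / φ(m)` elements, and the sum is
`φ(n) / φ(m)` times the sum of the primitive `m`-th roots of unity. The latter is `μ(m)`, by Möbius
inversion from the vanishing of the sum of all `k`-th roots of unity for `k > 1`.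
-/

lemma sum_nthRootsFinset_one (n : ℕ) (hn : 0 < n) :
    ∑ z ∈ Polynomial.nthRootsFinset n (1 : ℂ), z = if n = 1 then 1 else 0 := by
  have : NeZero n := ⟨hn.ne'⟩
  have hζ := Complex.isPrimitiveRoot_exp n hn.ne'
  set ζ := Complex.exp (2 * Real.pi * Complex.I / n)
  have himage : Polynomial.nthRootsFinset n (1 : ℂ) = (range n).image (fun i => ζ ^ i) := by
    ext z
    rw [Polynomial.mem_nthRootsFinset hn, mem_image]
    constructor
    · intro hz
      obtain ⟨i, hi, h⟩ := hζ.eq_pow_of_pow_eq_one hz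
      exact ⟨i, mem_range.2 hi, h⟩
    · rintro ⟨i, -, rfl⟩
      rw [← pow_mul, mul_comm, pow_mul, hζ.pow_eq_one, one_pow]
  rw [himage, sum_image]
  · split_ifs with h1
    · subst h1; simp
    · exact hζ.geom_sum_eq_zero (by omega)
  · intro i hi j hj h
    exact hζ.pow_inj (by simpa using hi) (by simpa using hj) h

/-- Both `k ↦ ∑ ζ ∈ primitiveRoots k ℂ, ζ` and `μ` have the indicator function of `1` as their sum
over divisors, so they agree by Möbius inversion. -/
lemma sum_primitiveRoots_eq_moebius (m : ℕ) (hm : 0 < m) :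
    ∑ z ∈ primitiveRoots m ℂ, z = ((ArithmeticFunction.moebius m : ℤ) : ℂ) := by
  have h1 : ∀ n > 0, ∑ i ∈ n.divisors, (∑ z ∈ primitiveRoots i ℂ, z)
      = (fun n : ℕ => if n = 1 then (1 : ℂ) else 0) n := by
    intro n hn
    simp only
    rw [← sum_nthRootsFinset_one n hn, IsPrimitiveRoot.nthRoots_one_eq_biUnion_primitiveRoots,
      sum_biUnion]
    intro i _ j _ hij
    exact IsPrimitiveRoot.disjoint hij
  have h2 : ∀ n > 0, ∑ i ∈ n.divisors, ((ArithmeticFunction.moebius i : ℤ) : ℂ)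
      = (fun n : ℕ => if n = 1 then (1 : ℂ) else 0) n := by
    intro n hn
    have h := congrArg (fun f : ArithmeticFunction ℤ => ((f n : ℤ) : ℂ))
      ArithmeticFunction.moebius_mul_coe_zeta
    simp only [ArithmeticFunction.coe_mul_zeta_apply, ArithmeticFunction.one_apply] at h
    push_cast at h
    exact h
  rw [← ArithmeticFunction.sum_eq_iff_sum_smul_moebius_eq.1 h1 m hm,
    ← ArithmeticFunction.sum_eq_iff_sum_smul_moebius_eq.1 h2 m hm]

lemma sum_primitiveRoots_eq_sum_units {n : ℕ} [NeZero n] {ζ : ℂ} (hζ : IsPrimitiveRoot ζ n)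
    (f : ℂ → ℂ) :
    ∑ z ∈ primitiveRoots n ℂ, f z = ∑ u : (ZMod n)ˣ, f (ζ ^ (u : ZMod n).val) := by
  symm
  refine sum_bij (fun u _ => ζ ^ (u : ZMod n).val) ?_ ?_ ?_ (fun _ _ => rfl)
  · intro u _
    rw [mem_primitiveRoots (NeZero.pos n)]
    exact hζ.pow_of_coprime _ (ZMod.val_coe_unit_coprime u)
  · intro u _ v _ h
    exact Units.ext (ZMod.val_injective n (hζ.pow_inj (ZMod.val_lt _) (ZMod.val_lt _) h))
  · intro z hz
    rw [mem_primitiveRoots (NeZero.pos n), hζ.isPrimitiveRoot_iff] at hz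
    obtain ⟨i, hi, hc, rfl⟩ := hz
    refine ⟨ZMod.unitOfCoprime i hc, mem_univ _, ?_⟩
    simp [ZMod.val_cast_of_lt hi]

lemma sum_units_comp_unitsMap {n m : ℕ} [NeZero n] [NeZero m] (h : m ∣ n)
    (g : (ZMod m)ˣ → ℂ) :
    ∑ u : (ZMod n)ˣ, g (ZMod.unitsMap h u)
      = ((n.totient : ℂ) / m.totient) * ∑ v : (ZMod m)ˣ, g v := by
  have hs := ZMod.unitsMap_surjective h
  have hf : ∀ v, #{u | ZMod.unitsMap h u = v} = #{u | ZMod.unitsMap h u = 1} := fun v =>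
    MonoidHom.card_fiber_eq_of_mem_range (ZMod.unitsMap h) (hs v) (hs 1)
  have key : ∀ g : (ZMod m)ˣ → ℂ, ∑ u : (ZMod n)ˣ, g (ZMod.unitsMap h u)
      = (#{u | ZMod.unitsMap h u = 1} : ℂ) * ∑ v : (ZMod m)ˣ, g v := by
    intro g
    rw [sum_comp g, image_univ_of_surjective hs, mul_sum]
    refine sum_congr rfl fun v _ => ?_
    rw [hf v, nsmul_eq_mul]
  -- Applying `key` to the constant function `1` computes the common size of the fibres.
  have h1 := key (fun _ => 1)
  simp only [sum_const, card_univ, ZMod.card_units_eq_totient, nsmul_eq_mul, mul_one] at h1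
  have hm : (m.totient : ℂ) ≠ 0 := by
    exact_mod_cast (Nat.totient_pos.2 (NeZero.pos m)).ne'
  rw [key g, h1, mul_div_cancel_right₀ _ hm]

/-- The Ramanujan sum formula, for the `c`-th powers of the primitive `n`-th roots of unity. -/
lemma sum_primitiveRoots_pow_eq (n c : ℕ) (hn : 0 < n) (hc : 0 < c) :
    ∑ z ∈ primitiveRoots n ℂ, z ^ c
      = ((n.totient : ℂ) / (n / n.gcd c).totient)
        * ((ArithmeticFunction.moebius (n / n.gcd c) : ℤ) : ℂ) := by
  have : NeZero n := ⟨hn.ne'⟩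
  have hζ := Complex.isPrimitiveRoot_exp n hn.ne'
  set ζ := Complex.exp (2 * Real.pi * Complex.I / n)
  have hη : IsPrimitiveRoot (ζ ^ c) (n / n.gcd c) := by
    rw [IsPrimitiveRoot.iff_orderOf, orderOf_pow' _ hc.ne', ← hζ.eq_orderOf]
  have hdvd : n / n.gcd c ∣ n := Nat.div_dvd_of_dvd (Nat.gcd_dvd_left n c)
  have hmpos : 0 < n / n.gcd c := Nat.pos_of_dvd_of_pos hdvd hn
  generalize n / n.gcd c = m at *
  have : NeZero m := ⟨hmpos.ne'⟩
  rw [← sum_primitiveRoots_eq_moebius m hmpos,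
    sum_primitiveRoots_eq_sum_units hη (fun z => z), ← sum_units_comp_unitsMap hdvd,
    sum_primitiveRoots_eq_sum_units hζ]
  refine sum_congr rfl fun u _ => ?_
  rw [← pow_mul, mul_comm, pow_mul, ZMod.unitsMap_val, ZMod.cast_eq_val, ZMod.val_natCast]
  exact pow_eq_pow_mod _ hη.pow_eq_one

lemma sum_gcd_eq_sum_primitiveRoots {N d : ℕ} (hN : 0 < N) (hd : d ∣ N) {ξ : ℂ}
    (hξ : IsPrimitiveRoot ξ N) (f : ℂ → ℂ) :
    ∑ i ∈ (Icc 1 N).filter (fun i => Nat.gcd i N = d), f (ξ ^ i)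
      = ∑ z ∈ primitiveRoots (N / d) ℂ, f z := by
  have : NeZero N := ⟨hN.ne'⟩
  have hnpos : 0 < N / d := Nat.div_pos (Nat.le_of_dvd hN hd) (Nat.pos_of_dvd_of_pos hd hN)
  have hord : ∀ i, 0 < i → orderOf (ξ ^ i) = N / Nat.gcd i N := fun i hi => by
    rw [orderOf_pow' _ hi.ne', ← hξ.eq_orderOf, Nat.gcd_comm]
  refine sum_bij (fun i _ => ξ ^ i) ?_ ?_ ?_ (fun _ _ => rfl)
  · intro i hi
    simp only [mem_filter, mem_Icc] at hi
    rw [mem_primitiveRoots hnpos, IsPrimitiveRoot.iff_orderOf, hord i hi.1.1, hi.2]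
  · intro i hi j hj h
    simp only [mem_filter, mem_Icc] at hi hj
    obtain ⟨i, rfl⟩ := Nat.exists_eq_add_of_le' hi.1.1
    obtain ⟨j, rfl⟩ := Nat.exists_eq_add_of_le' hj.1.1
    simp only [pow_succ] at h
    have := hξ.pow_inj (by omega) (by omega) (mul_right_cancel₀ (hξ.ne_zero hN.ne') h)
    omega
  · intro z hz
    rw [mem_primitiveRoots hnpos] at hz
    have hzN : z ^ N = 1 := (hz.pow_eq_one_iff_dvd N).2 (Nat.div_dvd_of_dvd hd)
    obtain ⟨j, hj, hjz⟩ := hξ.eq_pow_of_pow_eq_one hzN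
    -- Exponents run over `1, …, N` rather than `0, …, N - 1`, so `0` is replaced by `N`.
    obtain ⟨i, hi1, hiN, rfl⟩ : ∃ i, 1 ≤ i ∧ i ≤ N ∧ ξ ^ i = z := by
      rcases Nat.eq_zero_or_pos j with rfl | hj0
      · exact ⟨N, hN, le_rfl, by rw [hξ.pow_eq_one, ← hjz, pow_zero]⟩
      · exact ⟨j, hj0, hj.le, hjz⟩
    refine ⟨i, ?_, rfl⟩
    simp only [mem_filter, mem_Icc]
    refine ⟨⟨hi1, hiN⟩, ?_⟩
    have h := hz.eq_orderOf
    rw [hord i hi1] at h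
    have hN0 : N ≠ 0 := NeZero.ne N
    rw [← Nat.div_div_self hd hN0, h, Nat.div_div_self (Nat.gcd_dvd_right i N) hN0]

/-- For `ξ = exp(2πi/N)` a primitive `N`-th root of unity and positive divisors `d, c` of
`N`, we have `∑_{1 ≤ i ≤ N, gcd(i,N) = d} ξ^{ic} = (φ(N/d)/φ(N/gcd(N,dc))) · μ(N/gcd(N,dc))`. -/
theorem sum_primitive_roots_pow
    (N : ℕ) (hN : 0 < N) (d c : ℕ) (hd0 : 0 < d) (hc0 : 0 < c)
    (hd : d ∣ N) (hc : c ∣ N) :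
    (∑ i ∈ (Finset.Icc 1 N).filter (fun i => Nat.gcd i N = d),
        Complex.exp (2 * Real.pi * Complex.I / N) ^ (i * c)) =
      ((Nat.totient (N / d) : ℂ) / (Nat.totient (N / N.gcd (d * c)) : ℂ)) *
        ((ArithmeticFunction.moebius (N / N.gcd (d * c)) : ℤ) : ℂ) := by
  have hξ := Complex.isPrimitiveRoot_exp N hN.ne'
  have hnpos : 0 < N / d := Nat.div_pos (Nat.le_of_dvd hN hd) hd0
  have hm : N / N.gcd (d * c) = N / d / (N / d).gcd c := by
    obtain ⟨n, rfl⟩ := hd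
    rw [Nat.gcd_mul_left, Nat.mul_div_mul_left _ _ hd0, Nat.mul_div_cancel_left _ hd0]
  simp only [pow_mul]
  rw [sum_gcd_eq_sum_primitiveRoots hN hd hξ (fun z => z ^ c),
    sum_primitiveRoots_pow_eq _ c hnpos hc0, hm]
end

section
/- Let N be a positive integer, let e be a positive divisor of N, and let E = (e) = {d ∈ D(N) : e | d} be the filter in D(N) generated by e. Then for every c ∈ D(N): a_c(E) = N/e if (N/e) | c, and a_c(E) = 0 otherwise. In particular a_c(E) ≥ 0 for all c ∈ D(N) whenever E is a filter. -/
/-!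
Put `M = N/d` and `n = N/e`. Since `N / gcd(N, dc) = M / gcd(M, c)`, the sum `a_c((e))` equals
`∑_{M ∣ n} f(M)` with `f(M) = φ(M)/φ(M/gcd(M,c)) · μ(M/gcd(M,c))`, which is Hölder's formula for
the Ramanujan sum `c_M(c)`. Both `f * ζ` and `n ↦ n · [n ∣ c]` are multiplicative
(`ramanujanFn_isMultiplicative`, `divInd_isMultiplicative`), so it suffices to compare them at
prime powers, where `f(p^(k+1))` is `p^(k+1) - p^k`, `-p^k` or `0` according to how far `p^(k+1)`
is from dividing `c` (`ramanujanFn_prime_pow_succ`), and the sum telescopes.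
-/

open Finset

/-- `a_c(E) = ∑_{d ∈ E} (φ(N/d)/φ(N/gcd(N,dc))) · μ(N/gcd(N,dc))`. -/
noncomputable def acSum (N : ℕ) (E : Finset ℕ) (c : ℕ) : ℚ :=
  ∑ d ∈ E, ((Nat.totient (N / d) : ℚ) / (Nat.totient (N / N.gcd (d * c)) : ℚ)) *
    ((ArithmeticFunction.moebius (N / N.gcd (d * c)) : ℤ) : ℚ)

/-- The Ramanujan sum `c_M(c)` as an arithmetic function of `M`, defined by Hölder's formula. -/
noncomputable def ramanujanFn (c : ℕ) : ArithmeticFunction ℚ where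
  toFun M := ((Nat.totient M : ℚ) / (Nat.totient (M / M.gcd c) : ℚ)) *
    ((ArithmeticFunction.moebius (M / M.gcd c) : ℤ) : ℚ)
  map_zero' := by simp

/-- The arithmetic function `n ↦ n · [n ∣ c]`. -/
noncomputable def divInd (c : ℕ) : ArithmeticFunction ℚ where
  toFun n := if n ∣ c then (n : ℚ) else 0
  map_zero' := by simp

lemma ramanujanFn_apply (c M : ℕ) : ramanujanFn c M =
    ((Nat.totient M : ℚ) / (Nat.totient (M / M.gcd c) : ℚ)) *
    ((ArithmeticFunction.moebius (M / M.gcd c) : ℤ) : ℚ) := rfl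

lemma divInd_apply (c n : ℕ) : divInd c n = if n ∣ c then (n : ℚ) else 0 := rfl

lemma ramanujanFn_isMultiplicative (c : ℕ) : (ramanujanFn c).IsMultiplicative := by
  refine ⟨by simp [ramanujanFn_apply], ?_⟩
  intro m n hmn
  have hq : m * n / (m * n).gcd c = (m / m.gcd c) * (n / n.gcd c) := by
    rw [Nat.gcd_comm, hmn.gcd_mul c, Nat.gcd_comm c m, Nat.gcd_comm c n]
    exact Nat.mul_div_mul_comm (Nat.gcd_dvd_left m c) (Nat.gcd_dvd_left n c)
  have hco : Nat.Coprime (m / m.gcd c) (n / n.gcd c) :=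
    hmn.of_dvd (Nat.div_dvd_of_dvd (Nat.gcd_dvd_left m c))
      (Nat.div_dvd_of_dvd (Nat.gcd_dvd_left n c))
  simp only [ramanujanFn_apply]
  rw [hq, Nat.totient_mul hmn, Nat.totient_mul hco,
    ArithmeticFunction.isMultiplicative_moebius.map_mul_of_coprime hco]
  push_cast
  rw [mul_div_mul_comm]
  ring

lemma divInd_isMultiplicative (c : ℕ) : (divInd c).IsMultiplicative := by
  refine ⟨by simp [divInd_apply], ?_⟩
  intro m n hmn
  have h : m * n ∣ c ↔ m ∣ c ∧ n ∣ c :=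
    ⟨fun h => ⟨dvd_of_mul_right_dvd h, dvd_of_mul_left_dvd h⟩,
      fun h => hmn.mul_dvd_of_dvd_of_dvd h.1 h.2⟩
  simp only [divInd_apply, h]
  by_cases h1 : m ∣ c <;> by_cases h2 : n ∣ c <;> simp [h1, h2]

/-- At a prime power the Ramanujan sum is the increment of `n · [n ∣ c]`, which is what makes the
sum over the divisors of `p ^ k` telescope. -/
lemma ramanujanFn_prime_pow_succ (c : ℕ) {p : ℕ} (hp : p.Prime) (k : ℕ) :
    ramanujanFn c (p ^ (k + 1)) = divInd c (p ^ (k + 1)) - divInd c (p ^ k) := by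
  have hp0 : (p : ℚ) ≠ 0 := by exact_mod_cast hp.ne_zero
  have hp1 : (p : ℚ) - 1 ≠ 0 := by
    have : (1 : ℚ) < p := by exact_mod_cast hp.one_lt
    linarith
  have hcast : ((p - 1 : ℕ) : ℚ) = (p : ℚ) - 1 := by
    rw [Nat.cast_sub hp.one_le, Nat.cast_one]
  rw [ramanujanFn_apply, divInd_apply, divInd_apply]
  by_cases h1 : p ^ (k + 1) ∣ c
  · have h0 : p ^ k ∣ c := (pow_dvd_pow p k.le_succ).trans h1
    rw [Nat.gcd_eq_left h1, Nat.div_self (pow_pos hp.pos _), if_pos h1, if_pos h0,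
      Nat.totient_prime_pow_succ hp]
    push_cast [hcast]
    simp
    ring
  · obtain ⟨j, hj, hg⟩ := (Nat.dvd_prime_pow hp).1 (Nat.gcd_dvd_left (p ^ (k + 1)) c)
    have hjc : p ^ j ∣ c := hg ▸ Nat.gcd_dvd_right (p ^ (k + 1)) c
    have hjk : j ≤ k := by
      by_contra hlt
      exact h1 ((pow_dvd_pow p (by omega)).trans hjc)
    rw [hg, Nat.pow_div hj hp.pos, if_neg h1]
    by_cases h0 : p ^ k ∣ c
    · have hkj : k ≤ j := by
        have : p ^ k ∣ p ^ j := hg ▸ Nat.dvd_gcd (pow_dvd_pow p k.le_succ) h0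
        exact (Nat.pow_dvd_pow_iff_le_right hp.one_lt).1 this
      have : k + 1 - j = 1 := by omega
      rw [this, pow_one, if_pos h0, Nat.totient_prime_pow_succ hp, Nat.totient_prime hp,
        ArithmeticFunction.moebius_apply_prime hp]
      push_cast [hcast]
      field_simp
      ring
    · have hne : j ≠ k := fun h => h0 (h ▸ hjc)
      rw [if_neg h0, ArithmeticFunction.moebius_apply_prime_pow hp (by omega),
        if_neg (by omega)]
      simp

lemma ramanujanFn_mul_zeta (c : ℕ) :
    ramanujanFn c * (ArithmeticFunction.zeta : ArithmeticFunction ℚ) = divInd c := by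
  refine ((ramanujanFn_isMultiplicative c).mul
    ArithmeticFunction.isMultiplicative_zeta.natCast).eq_iff_eq_on_prime_powers _ _
      (divInd_isMultiplicative c) |>.2 fun p k hp => ?_
  rw [ArithmeticFunction.coe_mul_zeta_apply, Nat.sum_divisors_prime_pow hp]
  induction k with
  | zero => simp [(ramanujanFn_isMultiplicative c).map_one, divInd_apply]
  | succ k ih => rw [Finset.sum_range_succ, ih, ramanujanFn_prime_pow_succ c hp]; ring

/-- The substitution `M = N/d` maps the filter generated by `e` onto the divisors of `N/e`. -/
lemma acSum_filter_eq (N : ℕ) (hN : 0 < N) (e : ℕ) (he : e ∣ N) (c : ℕ) :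
    acSum N (N.divisors.filter (fun d => e ∣ d)) c = ∑ M ∈ (N / e).divisors, ramanujanFn c M := by
  have hn : N / e ≠ 0 := (Nat.div_pos (Nat.le_of_dvd hN he) (Nat.pos_of_dvd_of_pos he hN)).ne'
  unfold acSum
  refine Finset.sum_bij' (fun d _ => N / d) (fun M _ => N / M) ?_ ?_ ?_ ?_ ?_
  · intro d hd
    simp only [Finset.mem_filter, Nat.mem_divisors] at hd
    exact Nat.mem_divisors.2 ⟨Nat.div_dvd_div_left hd.1.1 hd.2, hn⟩
  · intro M hM
    have hM' := Nat.dvd_of_mem_divisors hM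
    have hMN : M ∣ N := hM'.trans (Nat.div_dvd_of_dvd he)
    simp only [Finset.mem_filter, Nat.mem_divisors]
    refine ⟨⟨Nat.div_dvd_of_dvd hMN, hN.ne'⟩, ?_⟩
    have := Nat.div_dvd_div_left (Nat.div_dvd_of_dvd he) hM'
    rwa [Nat.div_div_self he hN.ne'] at this
  · intro d hd
    simp only [Finset.mem_filter, Nat.mem_divisors] at hd
    exact Nat.div_div_self hd.1.1 hN.ne'
  · intro M hM
    exact Nat.div_div_self ((Nat.dvd_of_mem_divisors hM).trans (Nat.div_dvd_of_dvd he)) hN.ne'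
  · intro d hd
    simp only [Finset.mem_filter, Nat.mem_divisors] at hd
    obtain ⟨M, rfl⟩ := hd.1.1
    have hd0 : 0 < d := Nat.pos_of_mul_pos_right hN
    rw [ramanujanFn_apply, Nat.gcd_mul_left, Nat.mul_div_mul_left _ _ hd0,
      Nat.mul_div_cancel_left _ hd0]

/-- For the filter `E = (e) = {d ∣ N : e ∣ d}` in the divisors of `N` one has
`a_c(E) = N/e` if `(N/e) ∣ c` and `a_c(E) = 0` otherwise; in particular `a_c(E) ≥ 0`
for all divisors `c` of `N`. -/
theorem acSum_of_filter (N : ℕ) (hN : 0 < N) (e : ℕ) (he : e ∣ N) :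
    (∀ c ∈ N.divisors,
      acSum N (N.divisors.filter (fun d => e ∣ d)) c =
        if (N / e) ∣ c then ((N / e : ℕ) : ℚ) else 0) ∧
    (∀ c ∈ N.divisors, 0 ≤ acSum N (N.divisors.filter (fun d => e ∣ d)) c) := by
  have key : ∀ c ∈ N.divisors,
      acSum N (N.divisors.filter (fun d => e ∣ d)) c =
        if (N / e) ∣ c then ((N / e : ℕ) : ℚ) else 0 := by
    intro c _
    rw [acSum_filter_eq N hN e he, ← ArithmeticFunction.coe_mul_zeta_apply, ramanujanFn_mul_zeta,
      divInd_apply]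
  refine ⟨key, fun c hc => ?_⟩
  rw [key c hc]
  split_ifs <;> positivity
end

section
/- Let N be a positive integer and e a divisor of N with e ≠ 1 (so the filter (e) is not all of D(N)), and assume it is not the case that N is a prime power p^n and e = p. Then for the modified set Ẽ = (e) ∪ {1} there exists c ∈ D(N) with a_c(Ẽ) < 0. (If N = p^n and e = p, then (p) ∪ {1} = D(N) is again a filter.) -/
/-!
The summand of `acSum` at `d` is the Ramanujan sum `c_{N/d}(c)`. For `c = N / p` with `p` a prime
divisor of `N` it equals `φ(N/d)` if `p ∣ d` and `-φ(N/d)/(p-1)` otherwise (`acSum_term`), so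
everything reduces to `∑_{e ∣ d ∣ N} φ(N/d) = N/e` (`sum_totient_filter`).

* If some prime `p ∣ N` does not divide `e`, the filter contributes
  `N/(ep) - (N/e - N/(ep))/(p-1) = 0`, and the divisor `1` contributes `-φ(N)/(p-1) < 0`.
* If every prime divisor of `N` divides `e`, then `φ(N) = (N/e) φ(e)`. With `p` the least prime
  factor of `e`, the total is `N/e - φ(N)/(p-1) = (N/e)(1 - φ(e)/(p-1))`. This is negative because
  `φ(e) > p - 1` unless `e = p` (`minFac_le_totient`), and `e = p` would make `N` a power of `p`.
-/

open Finset

/-- Reindexing by `d ↦ N / d` turns this into Gauss's identity `∑_{m ∣ N/e} φ(m) = N/e`. -/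
lemma sum_totient_filter {N e : ℕ} (hN : 0 < N) (he : e ∣ N) :
    ∑ d ∈ N.divisors.filter (fun d => e ∣ d), (Nat.totient (N / d) : ℚ) = (N : ℚ) / e := by
  rw [← Nat.cast_div_charZero he, ← Nat.sum_totient (N / e), Nat.cast_sum]
  have hNe : N / e ∣ N := Nat.div_dvd_of_dvd he
  have he0 : 0 < e := Nat.pos_of_dvd_of_pos he hN
  have hq0 : N / e ≠ 0 := (Nat.div_pos (Nat.le_of_dvd hN he) he0).ne'
  refine Finset.sum_nbij' (fun d => N / d) (fun m => N / m) ?_ ?_ ?_ ?_ ?_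
  · intro d hd
    simp only [Finset.mem_filter, Nat.mem_divisors] at hd
    exact Nat.mem_divisors.2 ⟨Nat.div_dvd_div_left hd.1.1 hd.2, hq0⟩
  · intro m hm
    have hm1 := (Nat.mem_divisors.1 hm).1
    simp only [Finset.mem_filter, Nat.mem_divisors]
    refine ⟨⟨Nat.div_dvd_of_dvd (hm1.trans hNe), hN.ne'⟩, ?_⟩
    have := Nat.div_dvd_div_left hNe hm1
    rwa [Nat.div_div_self he hN.ne'] at this
  · intro d hd
    simp only [Finset.mem_filter, Nat.mem_divisors] at hd
    exact Nat.div_div_self hd.1.1 hN.ne'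
  · intro m hm
    exact Nat.div_div_self ((Nat.mem_divisors.1 hm).1.trans hNe) hN.ne'
  · intro d _
    rfl

/-- The summand of `acSum` for `c = N / p` with `p` prime. -/
lemma acSum_term {N p : ℕ} (hN : 0 < N) (hp : p.Prime) (hpN : p ∣ N) (d : ℕ) :
    ((Nat.totient (N / d) : ℚ) / (Nat.totient (N / N.gcd (d * (N / p))) : ℚ)) *
      ((ArithmeticFunction.moebius (N / N.gcd (d * (N / p))) : ℤ) : ℚ) =
    if p ∣ d then (Nat.totient (N / d) : ℚ) else -(Nat.totient (N / d) : ℚ) / (p - 1) := by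
  obtain ⟨c, rfl⟩ := hpN
  have hc : 0 < c := Nat.pos_of_mul_pos_left hN
  rw [Nat.mul_div_cancel_left c hp.pos, Nat.gcd_mul_right, Nat.mul_div_mul_right _ _ hc]
  split_ifs with h
  · rw [Nat.gcd_eq_left h, Nat.div_self hp.pos]
    simp
  · rw [(Nat.Prime.coprime_iff_not_dvd hp).2 h, Nat.div_one, Nat.totient_prime hp,
      ArithmeticFunction.moebius_apply_prime hp, Nat.cast_sub hp.one_le]
    push_cast
    ring

/-- `φ(e) ≥ p` for `p` the least prime factor of `e`, unless `e = p`. Taking the least prime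
factor matters: for `e = 2 * q` with `q` an odd prime, `φ(e) = q - 1` is smaller than `q`. -/
lemma minFac_le_totient {e : ℕ} (he0 : 0 < e) (he1 : e ≠ 1) (hne : e ≠ e.minFac) :
    e.minFac ≤ e.totient := by
  have hp := Nat.minFac_prime he1
  have hmin := fun q => Nat.minFac_le_of_dvd (n := e) (m := q)
  obtain ⟨m, hm⟩ := Nat.minFac_dvd e
  generalize e.minFac = p at *
  subst hm
  have hm0 : 0 < m := Nat.pos_of_mul_pos_left he0
  by_cases h : p ∣ m
  · rw [Nat.totient_mul_of_prime_of_dvd hp h]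
    exact Nat.le_mul_of_pos_right _ (Nat.totient_pos.2 hm0)
  · rw [Nat.totient_mul_of_prime_of_not_dvd hp h]
    have hm1 : m ≠ 1 := by rintro rfl; simp at hne
    have hpm : p ≤ m := hmin m (by omega) (Dvd.intro_left _ rfl)
    have hpm' : p ≠ m := by rintro rfl; exact h dvd_rfl
    have h2 := hp.two_le
    have hphi : 2 ≤ m.totient := by
      by_contra hlt
      have h0 := Nat.totient_pos.2 hm0
      have : m.totient = 1 := by omega
      rcases Nat.totient_eq_one_iff.1 this with h | h <;> omega
    calc p ≤ (p - 1) * 2 := by omega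
      _ ≤ _ := Nat.mul_le_mul_left _ hphi

/-- Let `e ∣ N` with `e ≠ 1` (so the filter `(e)` is a proper subset of the divisors of
`N`), and assume we are not in the case where `N = p ^ n` is a prime power and `e = p`.
Then for the modified set `Ẽ = (e) ∪ {1}` some `a_c(Ẽ)` with `c ∣ N` is negative. -/
theorem acSum_neg_of_filter_union_one
    (N : ℕ) (hN : 0 < N) (e : ℕ) (he : e ∣ N) (he1 : e ≠ 1)
    (hnp : ¬ ∃ (p n : ℕ), p.Prime ∧ N = p ^ n ∧ e = p) :
    ∃ c ∈ N.divisors,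
      acSum N (insert 1 (N.divisors.filter (fun d => e ∣ d))) c < 0 := by
  have he0 : 0 < e := Nat.pos_of_dvd_of_pos he hN
  have heQ : (0 : ℚ) < e := by exact_mod_cast he0
  have hNQ : (0 : ℚ) < N := by exact_mod_cast hN
  have hphi : (0 : ℚ) < N.totient := by exact_mod_cast Nat.totient_pos.2 hN
  have key : ∀ p : ℕ, p.Prime → p ∣ N →
      acSum N (insert 1 (N.divisors.filter (fun d => e ∣ d))) (N / p) =
        -(N.totient : ℚ) / (p - 1) + ∑ d ∈ N.divisors.filter (fun d => e ∣ d),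
          if p ∣ d then (Nat.totient (N / d) : ℚ) else -(Nat.totient (N / d) : ℚ) / (p - 1) := by
    intro p hp hpN
    unfold acSum
    rw [Finset.sum_congr rfl (fun d _ => acSum_term hN hp hpN d),
      Finset.sum_insert (by simp [he1]), if_neg hp.not_dvd_one, Nat.div_one]
  by_cases hall : ∀ p : ℕ, p.Prime → p ∣ N → p ∣ e
  · have hp := Nat.minFac_prime he1
    have hpe := Nat.minFac_dvd e
    have hne : e ≠ e.minFac := by
      intro h
      refine hnp ⟨e, N.primeFactorsList.length, h ▸ hp, ?_, rfl⟩
      refine Nat.eq_prime_pow_of_unique_prime_dvd hN.ne' fun {q} hq hqN => ?_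
      exact (Nat.prime_dvd_prime_iff_eq hq (h ▸ hp)).1 (hall q hq hqN)
    have hle := minFac_le_totient he0 he1 hne
    refine ⟨N / e.minFac, Nat.mem_divisors.2 ⟨Nat.div_dvd_of_dvd (hpe.trans he), hN.ne'⟩, ?_⟩
    rw [key _ hp (hpe.trans he), Finset.sum_congr rfl (fun d hd =>
      if_pos (hpe.trans (Finset.mem_filter.1 hd).2)), sum_totient_filter hN he]
    have hpf : N.primeFactors = e.primeFactors := by
      refine Finset.Subset.antisymm (fun q hq => ?_) (Nat.primeFactors_mono he hN.ne')
      have h1 := Nat.prime_of_mem_primeFactors hq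
      exact Nat.mem_primeFactors.2 ⟨h1, hall q h1 (Nat.dvd_of_mem_primeFactors hq), he0.ne'⟩
    have htot : (N.totient : ℚ) = N / e * e.totient := by
      rw [Nat.totient_eq_mul_prod_factors N, Nat.totient_eq_mul_prod_factors e, hpf]
      field_simp
    have hp1 : (0 : ℚ) < (e.minFac : ℚ) - 1 := by
      have : (1 : ℚ) < e.minFac := by exact_mod_cast hp.one_lt
      linarith
    have hleQ : (e.minFac : ℚ) ≤ e.totient := by exact_mod_cast hle
    have hq : (0 : ℚ) < N / e := by positivity
    have : (N : ℚ) / e < N.totient / ((e.minFac : ℚ) - 1) := by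
      rw [lt_div_iff₀ hp1, htot]
      exact mul_lt_mul_of_pos_left (by linarith) hq
    rw [neg_div]
    linarith
  · push Not at hall
    obtain ⟨p, hp, hpN, hpe⟩ := hall
    refine ⟨N / p, Nat.mem_divisors.2 ⟨Nat.div_dvd_of_dvd hpN, hN.ne'⟩, ?_⟩
    have hcop : Nat.Coprime e p := ((Nat.Prime.coprime_iff_not_dvd hp).2 hpe).symm
    have hepN : e * p ∣ N := hcop.mul_dvd_of_dvd_of_dvd he hpN
    have hp1 : (0 : ℚ) < (p : ℚ) - 1 := by
      have : (1 : ℚ) < p := by exact_mod_cast hp.one_lt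
      linarith
    have hsplit := Finset.sum_filter_add_sum_filter_not (N.divisors.filter (fun d => e ∣ d))
      (fun d => p ∣ d) (fun d => (Nat.totient (N / d) : ℚ))
    have hboth : (N.divisors.filter (fun d => e ∣ d)).filter (fun d => p ∣ d) =
        N.divisors.filter (fun d => e * p ∣ d) := by
      rw [Finset.filter_filter]
      refine Finset.filter_congr fun d _ => ⟨fun h => hcop.mul_dvd_of_dvd_of_dvd h.1 h.2,
        fun h => ⟨(Dvd.intro _ rfl).trans h, (Dvd.intro_left _ rfl).trans h⟩⟩
    rw [hboth, sum_totient_filter hN hepN, sum_totient_filter hN he] at hsplit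
    rw [key p hp hpN, Finset.sum_ite, hboth, sum_totient_filter hN hepN, ← Finset.sum_div,
      Finset.sum_neg_distrib, eq_sub_of_add_eq' hsplit]
    have hp0 : (0 : ℚ) < p := by linarith
    have hzero : (N : ℚ) / ((e * p : ℕ) : ℚ) +
        -((N : ℚ) / e - N / ((e * p : ℕ) : ℚ)) / (p - 1) = 0 := by
      push_cast
      field_simp
      ring
    rw [hzero, add_zero, neg_div]
    exact neg_neg_of_pos (div_pos hphi hp1)
end

section
/- Let N be a positive integer that is not a prime power (i.e. N has at least two distinct prime divisors). Then for the set Ẽ = D(N) \ {1} there exists c ∈ D(N) with a_c(Ẽ) < 0. (If N = p^n is a prime power, then D(N) \ {1} = (p) is again a filter.) -/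
/-!
After replacing `d` by `M = N / d`, the summands of `a_c` become the Ramanujan sums
`c_M(c) = φ(M) / φ(M / gcd(M, c)) · μ(M / gcd(M, c))`, so that
`a_c(D(N) \ {1}) = (∑_{M ∣ N} c_M(c)) - c_N(c)`.

The choice `c = N / (p q)` works for any two distinct primes `p, q` dividing `N`. On the one hand
`c_N(c) = φ(N) / φ(p q) > 0`, since `μ(p q) = 1`. On the other hand `∑_{M ∣ N} c_M(c) = 0`: as
`M ↦ c_M(c)` is multiplicative, this divisor sum has the factor
`∑_{i ≤ b + 1} c_{p^i}(c)`, where `p ^ (b + 1)` is the exact power of `p` dividing `N`. Since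
`p ^ b` exactly divides `c`, this factor is `∑_{i ≤ b} φ(p^i) - φ(p^(b+1)) / φ(p) = p^b - p^b`.
-/

open Finset

/-- The Ramanujan sum `c_M(c)`, as an arithmetic function of `M`, defined by Hölder's formula
`φ(M) / φ(M / gcd(M, c)) · μ(M / gcd(M, c))`. -/
noncomputable def ramanujanSum (c : ℕ) : ArithmeticFunction ℚ where
  toFun M := ((Nat.totient M : ℚ) / (Nat.totient (M / M.gcd c) : ℚ)) *
    ((ArithmeticFunction.moebius (M / M.gcd c) : ℤ) : ℚ)
  map_zero' := by simp

lemma ramanujanSum_apply (c M : ℕ) :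
    ramanujanSum c M = ((Nat.totient M : ℚ) / (Nat.totient (M / M.gcd c) : ℚ)) *
      ((ArithmeticFunction.moebius (M / M.gcd c) : ℤ) : ℚ) := rfl

lemma ramanujanSum_isMultiplicative (c : ℕ) : (ramanujanSum c).IsMultiplicative := by
  refine ⟨by simp [ramanujanSum_apply], ?_⟩
  intro m n h
  have hg : (m * n) / (m * n).gcd c = (m / m.gcd c) * (n / n.gcd c) := by
    rw [Nat.gcd_comm, Nat.Coprime.gcd_mul c h, Nat.gcd_comm c m, Nat.gcd_comm c n,
      Nat.div_mul_div_comm (Nat.gcd_dvd_left _ _) (Nat.gcd_dvd_left _ _)]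
  have hc : Nat.Coprime (m / m.gcd c) (n / n.gcd c) :=
    (h.coprime_dvd_left (Nat.div_dvd_of_dvd (Nat.gcd_dvd_left _ _))).coprime_dvd_right
      (Nat.div_dvd_of_dvd (Nat.gcd_dvd_left _ _))
  rw [ramanujanSum_apply, ramanujanSum_apply, ramanujanSum_apply, hg, Nat.totient_mul h,
    Nat.totient_mul hc, ArithmeticFunction.isMultiplicative_moebius.map_mul_of_coprime hc]
  push_cast
  rw [mul_div_mul_comm]
  ring

lemma acSum_divisors (N c : ℕ) (hN : 0 < N) :
    acSum N N.divisors c = ∑ M ∈ N.divisors, ramanujanSum c M := by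
  rw [← Nat.sum_div_divisors N (fun M => ramanujanSum c M)]
  refine Finset.sum_congr rfl fun d hd => ?_
  obtain ⟨M, rfl⟩ := Nat.dvd_of_mem_divisors hd
  have hd0 : 0 < d := Nat.pos_of_mul_pos_right hN
  rw [ramanujanSum_apply, Nat.gcd_mul_left, Nat.mul_div_cancel_left _ hd0,
    Nat.mul_div_mul_left _ _ hd0]

/-- The local factor at `p` vanishes when the exponent of `p` in `c` is exactly `b`. -/
lemma sum_ramanujanSum_prime_pow {p b r : ℕ} (hp : p.Prime) (hr : p.Coprime r) :
    ∑ M ∈ (p ^ (b + 1)).divisors, ramanujanSum (p ^ b * r) M = 0 := by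
  have hgcd (i : ℕ) : (p ^ i).gcd (p ^ b * r) = (p ^ i).gcd (p ^ b) :=
    Nat.Coprime.gcd_mul_right_cancel_right _ (hr.symm.pow_right i)
  rw [Nat.sum_divisors_prime_pow hp, Finset.sum_range_succ]
  have hlow : ∑ i ∈ Finset.range (b + 1), ramanujanSum (p ^ b * r) (p ^ i) = (p : ℚ) ^ b := by
    have hφ := Nat.sum_totient (p ^ b)
    rw [Nat.sum_divisors_prime_pow hp] at hφ
    have hφ' : (p : ℚ) ^ b = ∑ i ∈ Finset.range (b + 1), (Nat.totient (p ^ i) : ℚ) := by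
      exact_mod_cast hφ.symm
    rw [hφ']
    refine Finset.sum_congr rfl fun i hi => ?_
    have hi : i ≤ b := Nat.lt_succ_iff.mp (Finset.mem_range.mp hi)
    rw [ramanujanSum_apply, hgcd, Nat.gcd_eq_left (pow_dvd_pow p hi),
      Nat.div_self (pow_pos hp.pos i)]
    simp
  have htop : ramanujanSum (p ^ b * r) (p ^ (b + 1)) = -(p : ℚ) ^ b := by
    have hφ : ((p - 1 : ℕ) : ℚ) ≠ 0 := by
      have := hp.two_le
      exact_mod_cast (by omega : p - 1 ≠ 0)
    rw [ramanujanSum_apply, hgcd, Nat.gcd_eq_right (pow_dvd_pow p b.le_succ), pow_succ,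
      Nat.mul_div_cancel_left _ (pow_pos hp.pos b), ← pow_succ, Nat.totient_prime_pow_succ hp,
      Nat.totient_prime hp, ArithmeticFunction.moebius_apply_prime hp]
    push_cast
    field_simp
  rw [hlow, htop, add_neg_cancel]

lemma sum_ramanujanSum_eq_zero {p b q r : ℕ} (hp : p.Prime) (hm : p.Coprime (q * r)) :
    ∑ M ∈ (p ^ (b + 1) * (q * r)).divisors, ramanujanSum (p ^ b * r) M = 0 := by
  have hmul := (ramanujanSum_isMultiplicative (p ^ b * r)).mul
    (ArithmeticFunction.isMultiplicative_zeta.natCast (R := ℚ))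
  have h := hmul.map_mul_of_coprime (hm.pow_left (b + 1))
  simp only [ArithmeticFunction.coe_mul_zeta_apply] at h
  rw [h, sum_ramanujanSum_prime_pow hp (Nat.Coprime.coprime_mul_left_right hm), zero_mul]

/-- If `N` is not a prime power, i.e. it has at least two distinct prime divisors, then
for the set `Ẽ = D(N) \ {1}` of nontrivial divisors of `N` some `a_c(Ẽ)` with `c ∣ N`
is negative. -/
theorem acSum_neg_of_divisors_erase_one
    (N : ℕ) (hN : 0 < N)
    (hnp : ∃ p q : ℕ, p.Prime ∧ q.Prime ∧ p ≠ q ∧ p ∣ N ∧ q ∣ N) :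
    ∃ c ∈ N.divisors, acSum N (N.divisors.erase 1) c < 0 := by
  obtain ⟨p, q, hp, hq, hpq, hpN, hqN⟩ := hnp
  have hcop : p.Coprime q := (Nat.coprime_primes hp hq).mpr hpq
  obtain ⟨a, m, hpm, rfl⟩ := Nat.exists_eq_pow_mul_and_not_dvd hN.ne' p hp.ne_one
  obtain ⟨b, rfl⟩ : ∃ b, a = b + 1 := by
    refine Nat.exists_eq_succ_of_ne_zero ?_
    rintro rfl
    exact hpm (by simpa using hpN)
  obtain ⟨r, rfl⟩ : q ∣ m := (hcop.symm.pow_right (b + 1)).dvd_of_dvd_mul_left hqN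
  have hm : p.Coprime (q * r) := (Nat.Prime.coprime_iff_not_dvd hp).mpr hpm
  have hfac : p ^ (b + 1) * (q * r) = p ^ b * r * (p * q) := by ring
  have hdvd : p ^ b * r ∣ p ^ (b + 1) * (q * r) := ⟨p * q, hfac⟩
  refine ⟨p ^ b * r, Nat.mem_divisors.mpr ⟨hdvd, hN.ne'⟩, ?_⟩
  have hzero := acSum_divisors _ (p ^ b * r) hN
  rw [sum_ramanujanSum_eq_zero hp hm, acSum,
    ← Finset.add_sum_erase _ _ (Nat.one_mem_divisors.mpr hN.ne')] at hzero
  have hquot : p ^ (b + 1) * (q * r) / (p ^ (b + 1) * (q * r)).gcd (1 * (p ^ b * r)) = p * q := by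
    rw [one_mul, Nat.gcd_eq_right hdvd, hfac]
    exact Nat.mul_div_cancel_left _ (Nat.pos_of_dvd_of_pos hdvd hN)
  have hmu : ArithmeticFunction.moebius (p * q) = 1 := by
    rw [ArithmeticFunction.isMultiplicative_moebius.map_mul_of_coprime hcop,
      ArithmeticFunction.moebius_apply_prime hp, ArithmeticFunction.moebius_apply_prime hq]
    norm_num
  rw [hquot, hmu, Nat.div_one] at hzero
  have hpos : (0 : ℚ) < (Nat.totient (p ^ (b + 1) * (q * r)) : ℚ) / (Nat.totient (p * q) : ℚ) *
      ((1 : ℤ) : ℚ) := by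
    have h1 : (0 : ℚ) < Nat.totient (p ^ (b + 1) * (q * r)) := by
      exact_mod_cast Nat.totient_pos.mpr hN
    have h2 : (0 : ℚ) < Nat.totient (p * q) := by
      exact_mod_cast Nat.totient_pos.mpr (Nat.mul_pos hp.pos hq.pos)
    rw [Int.cast_one, mul_one]
    exact div_pos h1 h2
  rw [acSum]
  linarith
end

section
/- Let N be a positive integer, E ⊆ D(N), p a prime dividing N, and c ∈ D(N/p). Then a_c^p(E_p) = a_c(E) if pc divides N/p, and a_c^p(E_p) = ((p−1)·a_c(E) + a_{pc}(E))/p otherwise. In particular, if a_c(E) ≥ 0 for all c ∈ D(N), then a_c^p(E_p) ≥ 0 for all c ∈ D(N/p). -/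
/-!
Write `N = p * M` and compare the summands of `a_c(E)` one divisor `d ∈ E` at a time; for `M = c * e`
the modulus `N / gcd(N, d * c)` is `p * e / gcd(p * e, d)`.

* If `p ∣ d`, the summand at `d` equals the summand of `a_c^p` at `d / p` (`acTerm_mul_mul`).
  If moreover `p * c ∤ M`, that is `p ∤ e`, then replacing `c` by `p * c` does not change it
  (`acTerm_mul_left_of_dvd`).
* If `p ∤ d` and `p * c ∣ M`, then `p ^ 2` divides the modulus, so the Möbius factor vanishes
  (`acTerm_eq_zero`).
* If `p ∤ d` and `p * c ∤ M`, the modulus for `c` is `p` times the modulus for `p * c`, the latter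
  being prime to `p`; hence `(p - 1) * (summand for c) + (summand for p * c) = 0`
  (`acTerm_cancel`).

Summing over `E` gives both formulas, and nonnegativity follows because they have nonnegative
coefficients.
-/

open Finset

/-- The reduced divisor set `E_p = {d/p : d ∈ E, p ∣ d} ⊆ D(N/p)`. -/
def divReduced (E : Finset ℕ) (p : ℕ) : Finset ℕ :=
  (E.filter (fun d => p ∣ d)).image (fun d => d / p)

/-- The summand of `acSum N E c` at the divisor `d`. -/
noncomputable def acTerm (N c d : ℕ) : ℚ :=
  ((Nat.totient (N / d) : ℚ) / (Nat.totient (N / N.gcd (d * c)) : ℚ)) *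
    ((ArithmeticFunction.moebius (N / N.gcd (d * c)) : ℤ) : ℚ)

lemma mul_div_gcd_mul {c : ℕ} (hc : 0 < c) (e d : ℕ) :
    (c * e) / (c * e).gcd (d * c) = e / e.gcd d := by
  rw [mul_comm d c, Nat.gcd_mul_left, Nat.mul_div_mul_left _ _ hc]

lemma acTerm_mul_mul {p : ℕ} (hp : 0 < p) (M c d : ℕ) :
    acTerm (p * M) c (p * d) = acTerm M c d := by
  unfold acTerm
  rw [mul_assoc p d c, Nat.gcd_mul_left, Nat.mul_div_mul_left _ _ hp, Nat.mul_div_mul_left _ _ hp]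

lemma acTerm_mul_left_of_dvd {p c e : ℕ} (hp : p.Prime) (hc : 0 < c) (he : ¬ p ∣ e) (d : ℕ) :
    acTerm (p * (c * e)) (p * c) (p * d) = acTerm (p * (c * e)) c (p * d) := by
  have h : (e.gcd (p * d)) = e.gcd d :=
    ((Nat.Prime.coprime_iff_not_dvd hp).2 he).gcd_mul_left_cancel_right d
  rw [acTerm_mul_mul hp.pos, acTerm_mul_mul hp.pos]
  unfold acTerm
  rw [show d * (p * c) = (p * d) * c by ring, mul_div_gcd_mul hc, mul_div_gcd_mul hc, h]

lemma acTerm_eq_zero {p c d : ℕ} (hp : p.Prime) (hc : 0 < c) (f : ℕ) (hd : ¬ p ∣ d) :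
    acTerm (p * (p * c * f)) c d = 0 := by
  have hcop : (p * p).Coprime d :=
    ((Nat.Prime.coprime_iff_not_dvd hp).2 hd).mul_left ((Nat.Prime.coprime_iff_not_dvd hp).2 hd)
  unfold acTerm
  rw [show p * (p * c * f) = c * (p * p * f) by ring, mul_div_gcd_mul hc,
    hcop.gcd_mul_left_cancel, Nat.mul_div_assoc _ (Nat.gcd_dvd_left f d),
    ArithmeticFunction.moebius_eq_zero_of_not_squarefree]
  · simp
  · intro h
    exact hp.one_lt.ne' (Nat.isUnit_iff.1 (h p (dvd_mul_right _ _)))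

lemma acTerm_cancel {p c e d : ℕ} (hp : p.Prime) (hc : 0 < c) (he : ¬ p ∣ e) (hd : ¬ p ∣ d) :
    ((p : ℚ) - 1) * acTerm (p * (c * e)) c d + acTerm (p * (c * e)) (p * c) d = 0 := by
  have hpd : p.Coprime d := (Nat.Prime.coprime_iff_not_dvd hp).2 hd
  have h1 : (p * (c * e)) / (p * (c * e)).gcd (d * c) = p * (e / e.gcd d) := by
    rw [show p * (c * e) = c * (p * e) by ring, mul_div_gcd_mul hc,
      hpd.gcd_mul_left_cancel, Nat.mul_div_assoc _ (Nat.gcd_dvd_left e d)]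
  have h2 : (p * (c * e)) / (p * (c * e)).gcd (d * (p * c)) = e / e.gcd d := by
    rw [← mul_assoc, mul_div_gcd_mul (Nat.mul_pos hp.pos hc)]
  have hcop : p.Coprime (e / e.gcd d) :=
    ((Nat.Prime.coprime_iff_not_dvd hp).2 he).coprime_dvd_right
      (Nat.div_dvd_of_dvd (Nat.gcd_dvd_left e d))
  have hp1 : (p : ℚ) - 1 ≠ 0 := sub_ne_zero.2 (by exact_mod_cast hp.one_lt.ne')
  unfold acTerm
  rw [h1, h2, Nat.totient_mul hcop, Nat.totient_prime hp,
    ArithmeticFunction.isMultiplicative_moebius.map_mul_of_coprime hcop,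
    ArithmeticFunction.moebius_apply_prime hp]
  push_cast [Nat.cast_sub hp.one_lt.le]
  rw [div_mul_eq_div_div_swap]
  field_simp
  ring

lemma acSum_divReduced {p : ℕ} (hp : p.Prime) (M : ℕ) (E : Finset ℕ) (c : ℕ) :
    acSum M (divReduced E p) c = ∑ d ∈ E with p ∣ d, acTerm (p * M) c d := by
  unfold acSum divReduced
  rw [sum_image]
  · refine sum_congr rfl fun d hd => ?_
    obtain ⟨k, rfl⟩ := (mem_filter.1 hd).2
    rw [acTerm_mul_mul hp.pos, Nat.mul_div_cancel_left _ hp.pos]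
    rfl
  · intro a ha b hb hab
    obtain ⟨k, rfl⟩ := (mem_filter.1 ha).2
    obtain ⟨l, rfl⟩ := (mem_filter.1 hb).2
    simp only [Nat.mul_div_cancel_left _ hp.pos] at hab
    rw [hab]

lemma acSum_divReduced_eq {p : ℕ} (hp : p.Prime) {M c : ℕ} (hM : 0 < M) (hcM : c ∣ M)
    (E : Finset ℕ) :
    acSum M (divReduced E p) c =
      if (p * c) ∣ M then acSum (p * M) E c
      else (((p : ℚ) - 1) * acSum (p * M) E c + acSum (p * M) E (p * c)) / (p : ℚ) := by
  have hc : 0 < c := Nat.pos_of_dvd_of_pos hcM hM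
  rw [acSum_divReduced hp, sum_filter]
  change _ = if (p * c) ∣ M then ∑ d ∈ E, acTerm (p * M) c d
    else (((p : ℚ) - 1) * ∑ d ∈ E, acTerm (p * M) c d + ∑ d ∈ E, acTerm (p * M) (p * c) d) / p
  split_ifs with h
  · obtain ⟨f, rfl⟩ := h
    refine sum_congr rfl fun d _ => ?_
    split_ifs with hd
    · rfl
    · rw [acTerm_eq_zero hp hc f hd]
  · obtain ⟨e, rfl⟩ := hcM
    have he : ¬ p ∣ e := fun hpe => h (mul_comm c p ▸ Nat.mul_dvd_mul_left c hpe)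
    rw [mul_sum, ← sum_add_distrib, sum_div]
    refine sum_congr rfl fun d _ => ?_
    split_ifs with hd
    · obtain ⟨k, rfl⟩ := hd
      have hp0 : (p : ℚ) ≠ 0 := by exact_mod_cast hp.ne_zero
      rw [acTerm_mul_left_of_dvd hp hc he]
      field_simp
      ring
    · rw [acTerm_cancel hp hc he hd, zero_div]

/-- For a prime `p ∣ N` and `c ∈ D(N/p)` one has `a_c^p(E_p) = a_c(E)` if `pc ∣ N/p`, and
`a_c^p(E_p) = ((p−1)·a_c(E) + a_{pc}(E))/p` otherwise. In particular `a_c(E) ≥ 0` for all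
`c ∈ D(N)` implies `a_c^p(E_p) ≥ 0` for all `c ∈ D(N/p)`. -/
theorem acSum_reduced
    (N : ℕ) (hN : 0 < N) (E : Finset ℕ) (hE : E ⊆ N.divisors)
    (p : ℕ) (hp : p.Prime) (hpN : p ∣ N) :
    (∀ c ∈ (N / p).divisors,
      acSum (N / p) (divReduced E p) c =
        if (p * c) ∣ (N / p) then acSum N E c
        else (((p : ℚ) - 1) * acSum N E c + acSum N E (p * c)) / (p : ℚ)) ∧
    ((∀ c ∈ N.divisors, 0 ≤ acSum N E c) →
      ∀ c ∈ (N / p).divisors, 0 ≤ acSum (N / p) (divReduced E p) c) := by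
  obtain ⟨M, rfl⟩ := hpN
  rw [Nat.mul_div_cancel_left _ hp.pos]
  have hM : 0 < M := Nat.pos_of_mul_pos_left hN
  refine ⟨fun c hc => acSum_divReduced_eq hp hM (Nat.dvd_of_mem_divisors hc) E, ?_⟩
  intro h c hc
  have hcM := Nat.dvd_of_mem_divisors hc
  have h1 := h c (Nat.mem_divisors.2 ⟨hcM.mul_left p, hN.ne'⟩)
  have h2 := h (p * c) (Nat.mem_divisors.2 ⟨Nat.mul_dvd_mul_left p hcM, hN.ne'⟩)
  have hp1 : (0 : ℚ) ≤ (p : ℚ) - 1 := sub_nonneg.2 (by exact_mod_cast hp.one_lt.le)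
  rw [acSum_divReduced_eq hp hM hcM]
  split_ifs
  · exact h1
  · positivity
end

section
/- Let N be a positive integer and E ⊆ D(N) such that for every prime p dividing N there exists d ∈ E with p | d, and the set E_p = {d/p : d ∈ E, p | d} is a filter in D(N/p), say E_p = {d' ∈ D(N/p) : e_p | d'} for some e_p | N/p. Then either there exists a prime p | N with p | e_q for all primes q ≠ p dividing N, or e_p = 1 for all p. In the first case E = (p·e_p) or E = (p·e_p) ∪ {1}; in the second case E = D(N) or E = D(N) \ {1}. -/
/-!
Write `f p = p * e p`. The hypothesis on `E_p` says that a divisor `d` of `N` with `p ∣ d` lies in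
`E` iff `f p ∣ d` (`mem_iff_of_filter`). Testing this for `p` and `q` on `lcm (f q) p`, which is
divisible by both primes, gives `f p ∣ lcm (f q) p`, hence `e p ∣ f q` for all `p`, `q`, and
`f p ∣ f q` as soon as `p ∣ e q`.

If some `p` divides `e q` for all `q ≠ p`, then `f p` divides every `f q`, so `E` agrees with the
filter `(f p)` away from `1`. Otherwise every prime `r ∣ N` fails to divide some `f q`; as
`e p ∣ f q`, no prime divides any `e p`. Then all `e p` are `1` and `E` contains every divisor of
`N` other than possibly `1`.
-/

open Finset

/-- Membership in `E` of multiples of `p`, unpacked from the filter condition on `E_p`. -/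
theorem mem_iff_of_filter {N : ℕ} {E : Finset ℕ} {p c d : ℕ} (hp : p.Prime)
    (hfilter : divReduced E p = (N / p).divisors.filter (fun d => c ∣ d))
    (hN : 0 < N) (hd : d ∣ N) (hpd : p ∣ d) : d ∈ E ↔ p * c ∣ d := by
  obtain ⟨k, rfl⟩ := hpd
  obtain ⟨m, rfl⟩ := hd
  have hk : k ∈ divReduced E p ↔ p * k ∈ E := by
    simp only [divReduced, Finset.mem_image, Finset.mem_filter]
    constructor
    · rintro ⟨_, ⟨hx, ⟨l, rfl⟩⟩, h⟩
      rw [Nat.mul_div_cancel_left _ hp.pos] at h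
      exact h ▸ hx
    · exact fun h => ⟨p * k, ⟨h, dvd_mul_right _ _⟩, Nat.mul_div_cancel_left _ hp.pos⟩
  rw [← hk, hfilter, Nat.mul_dvd_mul_iff_left hp.pos, mul_assoc, Nat.mul_div_cancel_left _ hp.pos,
    Finset.mem_filter, Nat.mem_divisors]
  rw [mul_assoc] at hN
  exact ⟨fun h => h.2, fun h => ⟨⟨dvd_mul_right _ _, (Nat.pos_of_mul_pos_left hN).ne'⟩, h⟩⟩

/-- Let `E ⊆ D(N)` be such that every prime `p ∣ N` divides some member of `E` and every
reduced set `E_p` is the filter in `D(N/p)` generated by some `e_p ∣ N/p`. Then either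
there is a prime `p ∣ N` with `p ∣ e_q` for all primes `q ≠ p` dividing `N`, in which case
`E = (p·e_p)` or `E = (p·e_p) ∪ {1}`; or `e_p = 1` for all `p`, in which case `E = D(N)`
or `E = D(N) \ {1}`. -/
theorem divisor_filter_of_reductions_filters
    (N : ℕ) (hN : 0 < N) (E : Finset ℕ) (hE : E ⊆ N.divisors)
    (hcover : ∀ p : ℕ, p.Prime → p ∣ N → ∃ d ∈ E, p ∣ d)
    (e : ℕ → ℕ)
    (hediv : ∀ p : ℕ, p.Prime → p ∣ N → e p ∣ N / p)
    (hfilter : ∀ p : ℕ, p.Prime → p ∣ N →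
      divReduced E p = (N / p).divisors.filter (fun d => e p ∣ d)) :
    (∃ p : ℕ, p.Prime ∧ p ∣ N ∧
      (∀ q : ℕ, q.Prime → q ∣ N → q ≠ p → p ∣ e q) ∧
      (E = N.divisors.filter (fun d => p * e p ∣ d) ∨
        E = insert 1 (N.divisors.filter (fun d => p * e p ∣ d)))) ∨
    ((∀ p : ℕ, p.Prime → p ∣ N → e p = 1) ∧
      (E = N.divisors ∨ E = N.divisors.erase 1)) := by
  have hmem : ∀ p, p.Prime → p ∣ N → ∀ d, d ∣ N → p ∣ d → (d ∈ E ↔ p * e p ∣ d) :=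
    fun p hp hpN d hd hpd => mem_iff_of_filter hp (hfilter p hp hpN) hN hd hpd
  have hfN : ∀ p, p.Prime → p ∣ N → p * e p ∣ N := fun p hp hpN =>
    (Nat.mul_dvd_mul_left p (hediv p hp hpN)).trans (Nat.mul_div_cancel' hpN).dvd
  have hlcm : ∀ p q, p.Prime → p ∣ N → q.Prime → q ∣ N →
      p * e p ∣ Nat.lcm (q * e q) p := by
    intro p q hp hpN hq hqN
    have hL : Nat.lcm (q * e q) p ∣ N := Nat.lcm_dvd (hfN q hq hqN) hpN
    rw [← hmem p hp hpN _ hL (Nat.dvd_lcm_right _ _),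
      hmem q hq hqN _ hL ((dvd_mul_right _ _).trans (Nat.dvd_lcm_left _ _))]
    exact Nat.dvd_lcm_left _ _
  by_cases hcase : ∃ p : ℕ, p.Prime ∧ p ∣ N ∧ ∀ q : ℕ, q.Prime → q ∣ N → q ≠ p → p ∣ e q
  · left
    obtain ⟨p, hp, hpN, h⟩ := hcase
    refine ⟨p, hp, hpN, h, ?_⟩
    have hff : ∀ q, q.Prime → q ∣ N → p * e p ∣ q * e q := by
      intro q hq hqN
      by_cases hqp : q = p
      · rw [hqp]
      · exact (hlcm p q hp hpN hq hqN).trans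
          (Nat.lcm_dvd dvd_rfl ((h q hq hqN hqp).mul_left q))
    have hiff : ∀ d, d ≠ 1 → (d ∈ E ↔ d ∈ N.divisors.filter (fun d => p * e p ∣ d)) := by
      intro d hd1
      rw [Finset.mem_filter, Nat.mem_divisors]
      constructor
      · intro hdE
        have hdN := Nat.dvd_of_mem_divisors (hE hdE)
        obtain ⟨q, hq, hqd⟩ := Nat.exists_prime_and_dvd hd1
        have hqN := hqd.trans hdN
        exact ⟨⟨hdN, hN.ne'⟩, (hff q hq hqN).trans ((hmem q hq hqN d hdN hqd).1 hdE)⟩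
      · rintro ⟨⟨hdN, -⟩, hd⟩
        exact (hmem p hp hpN d hdN ((dvd_mul_right _ _).trans hd)).2 hd
    have h1 : 1 ∉ N.divisors.filter (fun d => p * e p ∣ d) := by
      intro h1
      exact hp.one_lt.ne' (Nat.dvd_one.1 ((dvd_mul_right _ _).trans (Finset.mem_filter.1 h1).2))
    by_cases h1E : 1 ∈ E
    · right
      ext d
      by_cases hd : d = 1
      · simp [hd, h1E]
      · rw [hiff d hd, Finset.mem_insert, or_iff_right hd]
    · left
      ext d
      by_cases hd : d = 1
      · rw [hd]
        exact iff_of_false h1E h1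
      · exact hiff d hd
  · right
    push Not at hcase
    have he : ∀ p : ℕ, p.Prime → p ∣ N → e p = 1 := by
      intro p hp hpN
      by_contra hne
      obtain ⟨r, hr, hre⟩ := Nat.exists_prime_and_dvd hne
      have hrN : r ∣ N := (hre.mul_left p).trans (hfN p hp hpN)
      obtain ⟨q, hq, hqN, hqr, hrq⟩ := hcase r hr hrN
      have hdvd : p * e p ∣ p * (q * e q) :=
        (hlcm p q hp hpN hq hqN).trans (Nat.lcm_dvd (dvd_mul_left _ _) (dvd_mul_right _ _))
      rcases hr.dvd_mul.1 (hre.trans (Nat.dvd_of_mul_dvd_mul_left hp.pos hdvd)) with h | h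
      · exact hqr ((Nat.prime_dvd_prime_iff_eq hr hq).1 h).symm
      · exact hrq h
    refine ⟨he, ?_⟩
    have hiff : ∀ d, d ≠ 1 → (d ∈ E ↔ d ∈ N.divisors) := by
      intro d hd1
      refine ⟨fun h => hE h, fun h => ?_⟩
      have hdN := Nat.dvd_of_mem_divisors h
      obtain ⟨q, hq, hqd⟩ := Nat.exists_prime_and_dvd hd1
      have hqN := hqd.trans hdN
      rw [hmem q hq hqN d hdN hqd, he q hq hqN, mul_one]
      exact hqd
    by_cases h1E : 1 ∈ E
    · left
      ext d
      by_cases hd : d = 1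
      · rw [hd]
        exact iff_of_true h1E (hE h1E)
      · exact hiff d hd
    · right
      ext d
      by_cases hd : d = 1
      · simp [hd, h1E]
      · rw [hiff d hd, Finset.mem_erase, and_iff_right hd]
end

section
/- Let N be a positive integer and E a nonempty subset of D(N). If a_c(E) ≥ 0 for every c ∈ D(N), then E is a filter in D(N), i.e. there exists e ∈ D(N) with E = {d ∈ D(N) : e | d}. -/
/-!
For `d ∣ N` the summand of `acSum N E c` at `d` is the Ramanujan sum of modulus `N / d` at `c`, so
`acSum N E` is the Fourier transform of the indicator function of
`{k ∈ ℤ/N : gcd (k, N) ∈ E}`. A `0`-`1` valued function with nonnegative Fourier transform is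
the indicator of a subgroup, and this is the argument below, carried out on divisors only.

Hölder's formula (`hoelder_aux`, `ramanujanTerm_eq_sum`) turns the summand into a Möbius divisor
sum; two Möbius inversions then show that the matrix of Ramanujan sums squares to `N` times the
identity (`ramanujanTerm_orthogonality`). Hence `∑ c, acSum N E c * ramanujanTerm N c k` is `N` for
`k ∈ E` and `0` for other divisors `k` (`sum_acSum_mul`). Since
`ramanujanTerm N c k ≤ φ (N / c)`, with equality exactly when `N ∣ c * k`, and the weights
`acSum N E c` are nonnegative, comparison with `k = N` gives `N ∈ E`, and then `k ∈ E` if and only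
if `N / c ∣ k` for every `c` with `acSum N E c ≠ 0`. So `E` is the filter generated by the least
common multiple of these `N / c`.
-/

open Finset

/-! ### Hölder's and Kluyver's formulas for Ramanujan sums -/

open ArithmeticFunction in
/-- Hölder's evaluation of the Ramanujan sum, with denominators cleared: `q = m * g` is the modulus
and `g` its gcd with the argument. Proved by adding one prime at a time to `g`, for all `m`
simultaneously. -/
lemma hoelder_aux (g : ℕ) (hg : g ≠ 0) : ∀ m : ℕ, m ≠ 0 →
    (m.totient : ℚ) * ∑ t ∈ g.divisors, (moebius (m * t) : ℚ) * ((g : ℚ) / t)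
      = (moebius m : ℚ) * ((m * g).totient : ℚ) := by
  induction g using induction_on_primes with
  | zero => exact absurd rfl hg
  | one => intro m hm; simp [mul_comm]
  | prime_mul p a hp ih =>
    have ha : a ≠ 0 := by rintro rfl; simp at hg
    replace ih := ih ha
    intro m hm
    have hp0 : (p : ℚ) ≠ 0 := by exact_mod_cast hp.ne_zero
    have hmul : ∑ t ∈ a.divisors, (moebius (m * t) : ℚ) * (((p * a : ℕ) : ℚ) / t)
        = p * ∑ t ∈ a.divisors, (moebius (m * t) : ℚ) * ((a : ℚ) / t) := by
      rw [mul_sum]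
      refine sum_congr rfl fun t _ => ?_
      push_cast; ring
    by_cases hpa : p ∣ a
    · -- divisors of `p * a` that do not divide `a` are not squarefree
      have hs : ∑ t ∈ (p * a).divisors, (moebius (m * t) : ℚ) * (((p * a : ℕ) : ℚ) / t)
          = ∑ t ∈ a.divisors, (moebius (m * t) : ℚ) * (((p * a : ℕ) : ℚ) / t) := by
        symm
        refine sum_subset (Nat.divisors_subset_of_dvd hg (dvd_mul_left a p)) ?_
        intro t ht hta
        have htd : t ∣ p * a := Nat.dvd_of_mem_divisors ht
        have hta' : ¬ t ∣ a := fun h => hta (Nat.mem_divisors.2 ⟨h, ha⟩)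
        have hpt : p ∣ t := by
          by_contra h
          exact hta' (((Nat.Prime.coprime_iff_not_dvd hp).2 h).symm.dvd_of_dvd_mul_left htd)
        obtain ⟨s, rfl⟩ := hpt
        have hsa : s ∣ a := Nat.dvd_of_mul_dvd_mul_left hp.pos htd
        have hps : p ∣ s := by
          by_contra h
          exact hta' (((Nat.Prime.coprime_iff_not_dvd hp).2 h).mul_dvd_of_dvd_of_dvd hpa hsa)
        have : ¬ Squarefree (m * (p * s)) := by
          intro h
          exact hp.not_isUnit (h p ((mul_dvd_mul_left p hps).trans (dvd_mul_left _ _)))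
        rw [moebius_eq_zero_of_not_squarefree this]; simp
      rw [hs, hmul, mul_left_comm m p a,
        Nat.totient_mul_of_prime_of_dvd hp (dvd_mul_of_dvd_right hpa m)]
      push_cast
      linear_combination (p : ℚ) * ih m hm
    · have hs : ∑ t ∈ (p * a).divisors, (moebius (m * t) : ℚ) * (((p * a : ℕ) : ℚ) / t)
          = ∑ t ∈ a.divisors, (moebius (m * t) : ℚ) * (((p * a : ℕ) : ℚ) / t)
            + ∑ t ∈ a.divisors, (moebius (m * p * t) : ℚ) * ((a : ℚ) / t) := by
        have hd : (p * a).divisors = a.divisors ∪ a.divisors.image (p * ·) := by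
          ext t
          simp only [Nat.mem_divisors, mem_union, mem_image]
          constructor
          · rintro ⟨h, -⟩
            by_cases hpt : p ∣ t
            · obtain ⟨s, rfl⟩ := hpt
              exact Or.inr ⟨s, ⟨Nat.dvd_of_mul_dvd_mul_left hp.pos h, ha⟩, rfl⟩
            · exact Or.inl
                ⟨((Nat.Prime.coprime_iff_not_dvd hp).2 hpt).symm.dvd_of_dvd_mul_left h, ha⟩
          · rintro (⟨h, -⟩ | ⟨s, ⟨h, -⟩, rfl⟩)
            · exact ⟨dvd_mul_of_dvd_right h p, hg⟩
            · exact ⟨mul_dvd_mul_left p h, hg⟩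
        rw [hd, sum_union, sum_image]
        · congr 1
          refine sum_congr rfl fun t _ => ?_
          rw [mul_assoc m p t]
          push_cast
          rw [mul_div_mul_left _ _ hp0]
        · intro x _ y _ h
          exact Nat.eq_of_mul_eq_mul_left hp.pos h
        · rw [disjoint_left]
          intro t ht ht'
          obtain ⟨s, -, rfl⟩ := mem_image.1 ht'
          exact hpa ((dvd_mul_right p s).trans (Nat.dvd_of_mem_divisors ht))
      rw [hs, hmul]
      have h1 := ih m hm
      have h2 := ih (m * p) (mul_ne_zero hm hp.ne_zero)
      by_cases hpm : p ∣ m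
      · have hsq : ¬ Squarefree (m * p) := fun h =>
          hp.not_isUnit (h p (mul_dvd_mul_right hpm p))
        have hφ : ((m * p).totient : ℚ) ≠ 0 := by
          exact_mod_cast (Nat.totient_pos.2 (Nat.pos_of_ne_zero (mul_ne_zero hm hp.ne_zero))).ne'
        rw [moebius_eq_zero_of_not_squarefree hsq, Int.cast_zero, zero_mul] at h2
        rw [(mul_eq_zero.1 h2).resolve_left hφ, mul_left_comm m p a,
          Nat.totient_mul_of_prime_of_dvd hp (dvd_mul_of_dvd_left hpm a)]
        push_cast
        linear_combination (p : ℚ) * h1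
      · have hpma : ¬ p ∣ m * a := fun h => (hp.dvd_mul.1 h).elim hpm hpa
        have hcop : m.Coprime p := ((Nat.Prime.coprime_iff_not_dvd hp).2 hpm).symm
        have hp1 : ((p - 1 : ℕ) : ℚ) ≠ 0 := by
          have := hp.two_le
          exact_mod_cast (by omega : p - 1 ≠ 0)
        have hp1' : ((p - 1 : ℕ) : ℚ) = p - 1 := by
          rw [Nat.cast_sub hp.one_le, Nat.cast_one]
        rw [isMultiplicative_moebius.map_mul_of_coprime hcop, moebius_apply_prime hp,
          mul_comm m p, Nat.totient_mul_of_prime_of_not_dvd hp hpm, mul_assoc p m a,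
          Nat.totient_mul_of_prime_of_not_dvd hp hpma, mul_comm p m] at h2
        rw [mul_left_comm m p a, Nat.totient_mul_of_prime_of_not_dvd hp hpma]
        push_cast at h2 ⊢
        have h3 : (m.totient : ℚ) * ∑ t ∈ a.divisors, (moebius (m * p * t) : ℚ) * ((a : ℚ) / t)
            = - (moebius m : ℚ) * ((m * a).totient : ℚ) := by
          apply mul_left_cancel₀ hp1
          linear_combination h2
        rw [hp1']
        linear_combination (p : ℚ) * h1 + h3

/-- The summand of `acSum N E c` at `d`, in Hölder's form. For `d ∣ N` it is the Ramanujan sum of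
modulus `N / d` and argument `c`. -/
noncomputable def ramanujanTerm (N d c : ℕ) : ℚ :=
  ((Nat.totient (N / d) : ℚ) / (Nat.totient (N / N.gcd (d * c)) : ℚ)) *
    ((ArithmeticFunction.moebius (N / N.gcd (d * c)) : ℤ) : ℚ)

open ArithmeticFunction in
/-- Kluyver's divisor-sum form of the Ramanujan sum. -/
lemma ramanujanTerm_eq_sum {N d c : ℕ} (hN : 0 < N) (hd : d ∣ N) :
    ramanujanTerm N d c = ∑ g ∈ N.divisors,
      if g ∣ c ∧ g * d ∣ N then (moebius (N / (g * d)) : ℚ) * g else 0 := by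
  obtain ⟨q, rfl⟩ := hd
  have hd0 : 0 < d := Nat.pos_of_mul_pos_right hN
  have hq0 : 0 < q := Nat.pos_of_mul_pos_left hN
  obtain ⟨m, hm⟩ : q.gcd c ∣ q := Nat.gcd_dvd_left q c
  have hg0 : 0 < q.gcd c := Nat.gcd_pos_of_pos_left c hq0
  have hset : {g ∈ (d * q).divisors | g ∣ c ∧ g * d ∣ d * q} = (q.gcd c).divisors := by
    ext g
    simp only [mem_filter, Nat.mem_divisors, Nat.dvd_gcd_iff]
    constructor
    · rintro ⟨-, h1, h2⟩
      rw [mul_comm d q] at h2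
      exact ⟨⟨Nat.dvd_of_mul_dvd_mul_right hd0 h2, h1⟩, hg0.ne'⟩
    · rintro ⟨⟨h1, h2⟩, -⟩
      refine ⟨⟨dvd_mul_of_dvd_right h1 d, hN.ne'⟩, h2, ?_⟩
      rw [mul_comm d q]
      exact mul_dvd_mul_right h1 d
  rw [← sum_filter, hset, ramanujanTerm, Nat.gcd_mul_left, Nat.mul_div_mul_left _ _ hd0,
    Nat.mul_div_cancel_left _ hd0]
  generalize q.gcd c = g at *
  subst hm
  have hm0 : 0 < m := Nat.pos_of_mul_pos_left hq0
  rw [Nat.mul_div_cancel_left _ hg0, ← Nat.sum_div_divisors]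
  have key := hoelder_aux g hg0.ne' m hm0.ne'
  have hφ : (m.totient : ℚ) ≠ 0 := by exact_mod_cast (Nat.totient_pos.2 hm0).ne'
  have hsum : ∑ t ∈ g.divisors,
        (moebius (d * (g * m) / (g / t * d)) : ℚ) * ((g / t : ℕ) : ℚ)
      = ∑ t ∈ g.divisors, (moebius (m * t) : ℚ) * ((g : ℚ) / t) := by
    refine sum_congr rfl fun t ht => ?_
    obtain ⟨s, rfl⟩ := Nat.dvd_of_mem_divisors ht
    have ht0 : 0 < t := Nat.pos_of_mul_pos_right hg0
    have hs0 : 0 < s := Nat.pos_of_mul_pos_left hg0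
    have ht0' : (t : ℚ) ≠ 0 := by exact_mod_cast ht0.ne'
    rw [Nat.mul_div_cancel_left _ ht0,
      show d * (t * s * m) = (s * d) * (m * t) by ring,
      Nat.mul_div_cancel_left _ (Nat.mul_pos hs0 hd0)]
    push_cast
    rw [mul_div_cancel_left₀ _ ht0']
  rw [hsum, div_mul_eq_mul_div, div_eq_iff hφ, mul_comm g m]
  linear_combination -key

/-! ### Orthogonality -/

open ArithmeticFunction in
/-- Möbius inversion on the interval of divisors between `g` and `N / h`. -/
lemma sum_moebius_interval {N g h : ℕ} (hN : 0 < N) :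
    ∑ c ∈ N.divisors, (if g ∣ c ∧ c * h ∣ N then (moebius (N / (c * h)) : ℚ) else 0)
      = if g * h = N then 1 else 0 := by
  by_cases hgh : g * h ∣ N
  · obtain ⟨r, rfl⟩ := hgh
    have hgh0 : 0 < g * h := Nat.pos_of_mul_pos_right hN
    have hr0 : 0 < r := Nat.pos_of_mul_pos_left hN
    have hg0 : 0 < g := Nat.pos_of_mul_pos_right hgh0
    have hset : {c ∈ (g * h * r).divisors | g ∣ c ∧ c * h ∣ g * h * r}
        = r.divisors.image (g * ·) := by
      ext c
      simp only [mem_filter, Nat.mem_divisors, mem_image]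
      constructor
      · rintro ⟨-, ⟨s, rfl⟩, h2⟩
        rw [mul_right_comm] at h2
        exact ⟨s, ⟨Nat.dvd_of_mul_dvd_mul_left hgh0 h2, hr0.ne'⟩, rfl⟩
      · rintro ⟨s, ⟨h1, -⟩, rfl⟩
        have : g * s * h ∣ g * h * r := by
          rw [mul_right_comm]; exact mul_dvd_mul_left _ h1
        exact ⟨⟨(dvd_mul_right _ _).trans this, hN.ne'⟩, dvd_mul_right _ _, this⟩
    rw [← sum_filter, hset, sum_image fun x _ y _ hxy => Nat.eq_of_mul_eq_mul_left hg0 hxy]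
    have : ∀ s ∈ r.divisors, (moebius (g * h * r / (g * s * h)) : ℚ) = (moebius (r / s) : ℚ) := by
      intro s _
      rw [mul_right_comm g s h, Nat.mul_div_mul_left _ _ hgh0]
    rw [sum_congr rfl this, Nat.sum_div_divisors r (fun s => (moebius s : ℚ))]
    have h1 : ((moebius : ArithmeticFunction ℤ) * (zeta : ArithmeticFunction ℤ)) r
        = (1 : ArithmeticFunction ℤ) r := by rw [moebius_mul_coe_zeta]
    rw [coe_mul_zeta_apply, one_apply] at h1
    rw [← Int.cast_sum, h1]
    have : g * h = g * h * r ↔ r = 1 := by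
      constructor
      · intro h; exact Nat.eq_of_mul_eq_mul_left hgh0 (by rw [← h, mul_one])
      · rintro rfl; rw [mul_one]
    simp [this]
  · rw [if_neg (fun heq => hgh (dvd_of_eq heq))]
    refine sum_eq_zero fun c _ => if_neg ?_
    rintro ⟨h1, h2⟩
    exact hgh ((mul_dvd_mul_right h1 h).trans h2)

open ArithmeticFunction in
/-- The matrix of Ramanujan sums indexed by the divisors of `N` squares to `N` times the
identity. -/
lemma ramanujanTerm_orthogonality {N d k : ℕ} (hN : 0 < N) (hd : d ∣ N) (hk : k ∣ N) :
    ∑ c ∈ N.divisors, ramanujanTerm N d c * ramanujanTerm N c k = if d = k then (N : ℚ) else 0 := by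
  have step1 : ∑ c ∈ N.divisors, ramanujanTerm N d c * ramanujanTerm N c k
      = ∑ g ∈ N.divisors, ∑ h ∈ N.divisors,
        (if g * d ∣ N then (moebius (N / (g * d)) : ℚ) * g else 0) * (if h ∣ k then (h : ℚ) else 0)
        * ∑ c ∈ N.divisors, (if g ∣ c ∧ c * h ∣ N then (moebius (N / (c * h)) : ℚ) else 0) := by
    simp_rw [mul_sum]
    have : ∀ c ∈ N.divisors, ramanujanTerm N d c * ramanujanTerm N c k =
        ∑ g ∈ N.divisors, ∑ h ∈ N.divisors,
        (if g * d ∣ N then (moebius (N / (g * d)) : ℚ) * g else 0) * (if h ∣ k then (h : ℚ) else 0)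
        * (if g ∣ c ∧ c * h ∣ N then (moebius (N / (c * h)) : ℚ) else 0) := by
      intro c hc
      rw [ramanujanTerm_eq_sum hN hd, ramanujanTerm_eq_sum hN (Nat.dvd_of_mem_divisors hc),
        sum_mul_sum]
      refine sum_congr rfl fun g _ => sum_congr rfl fun h _ => ?_
      rw [mul_comm h c]
      split_ifs <;> first | (exfalso; tauto) | ring
    rw [sum_congr rfl this, sum_comm]
    exact sum_congr rfl fun g _ => sum_comm
  obtain ⟨l, rfl⟩ := hk
  have hk0 : 0 < k := Nat.pos_of_mul_pos_right hN
  have hl0 : 0 < l := Nat.pos_of_mul_pos_left hN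
  have step2 : ∀ g ∈ (k * l).divisors, ∑ h ∈ (k * l).divisors,
        (if g * d ∣ k * l then (moebius (k * l / (g * d)) : ℚ) * g else 0)
          * (if h ∣ k then (h : ℚ) else 0)
        * ∑ c ∈ (k * l).divisors,
          (if g ∣ c ∧ c * h ∣ k * l then (moebius (k * l / (c * h)) : ℚ) else 0)
      = ((k * l : ℕ) : ℚ) *
        (if l ∣ g ∧ g * d ∣ k * l then (moebius (k * l / (g * d)) : ℚ) else 0) := by
    intro g hg
    obtain ⟨f, hf⟩ := Nat.dvd_of_mem_divisors hg
    have hg0 : 0 < g := Nat.pos_of_mem_divisors hg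
    have hf0 : 0 < f := by rw [hf] at hN; exact Nat.pos_of_mul_pos_left hN
    simp_rw [sum_moebius_interval hN]
    -- only `h = N / g` contributes
    rw [sum_eq_single f]
    · have hiff : f ∣ k ↔ l ∣ g := by
        constructor
        · rintro ⟨s, rfl⟩
          refine ⟨s, Nat.eq_of_mul_eq_mul_right hf0 ?_⟩
          rw [← hf]; ring
        · rintro ⟨s, rfl⟩
          refine ⟨s, Nat.eq_of_mul_eq_mul_right hl0 ?_⟩
          rw [hf]; ring
      simp only [hiff, hf]
      push_cast
      split_ifs <;> first | (exfalso; tauto) | ring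
    · intro h _ hne
      have hgh : g * h ≠ k * l := fun h' =>
        hne (Nat.eq_of_mul_eq_mul_left hg0 (h'.trans hf))
      rw [if_neg hgh, mul_zero]
    · intro h
      exact absurd (Nat.mem_divisors.2 ⟨⟨g, by rw [hf, mul_comm]⟩, hN.ne'⟩) h
  rw [step1, sum_congr rfl step2, ← mul_sum, sum_moebius_interval hN]
  have : l * d = k * l ↔ d = k := by
    rw [mul_comm k l]
    exact ⟨fun h => Nat.eq_of_mul_eq_mul_left hl0 h, fun h => by rw [h]⟩
  simp [this]

/-! ### The trivial bound and the filter -/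

lemma ramanujanTerm_of_dvd {N c k : ℕ} (hN : 0 < N) (h : N ∣ c * k) :
    ramanujanTerm N c k = (N / c).totient := by
  simp [ramanujanTerm, Nat.gcd_eq_left h, Nat.div_self hN]

/-- A Ramanujan sum attains the trivial bound `φ (N / c)` only when every root of unity in it
is `1`. -/
lemma ramanujanTerm_lt {N c k : ℕ} (hN : 0 < N) (hc : c ∣ N) (h : ¬ N ∣ c * k) :
    ramanujanTerm N c k < (N / c).totient := by
  rw [ramanujanTerm]
  have hg : N.gcd (c * k) ∣ N := Nat.gcd_dvd_left _ _
  have hn0 : 0 < N / N.gcd (c * k) := Nat.div_pos (Nat.le_of_dvd hN hg)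
    (Nat.gcd_pos_of_pos_left _ hN)
  have hn1 : N / N.gcd (c * k) ≠ 1 := by
    intro h1
    apply h
    have := Nat.div_mul_cancel hg
    rw [h1, one_mul] at this
    exact Nat.gcd_eq_left_iff_dvd.1 this
  generalize N / N.gcd (c * k) = n at *
  have hA : 0 < (((N / c).totient : ℕ) : ℚ) := by
    exact_mod_cast Nat.totient_pos.2
      (Nat.div_pos (Nat.le_of_dvd hN hc) (Nat.pos_of_dvd_of_pos hc hN))
  have hφ : 0 < n.totient := Nat.totient_pos.2 hn0
  have hφ' : 0 < (n.totient : ℚ) := by exact_mod_cast hφ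
  have hμ : ArithmeticFunction.moebius n ≤ 1 :=
    (abs_le.1 ArithmeticFunction.abs_moebius_le_one).2
  have hlt : ArithmeticFunction.moebius n < (n.totient : ℤ) := by
    by_cases h1 : n.totient = 1
    · rcases Nat.totient_eq_one_iff.1 h1 with h2 | h2
      · exact absurd h2 hn1
      · rw [h2, ArithmeticFunction.moebius_apply_prime Nat.prime_two]; simp
    · omega
  have hlt' : (ArithmeticFunction.moebius n : ℚ) < n.totient := by exact_mod_cast hlt
  rw [div_mul_eq_mul_div, div_lt_iff₀ hφ']
  exact mul_lt_mul_of_pos_left hlt' hA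

/-- Inversion: the membership indicator of `E` is recovered from the numbers `acSum N E c`. -/
lemma sum_acSum_mul {N k : ℕ} {E : Finset ℕ} (hN : 0 < N) (hE : E ⊆ N.divisors) (hk : k ∣ N) :
    ∑ c ∈ N.divisors, acSum N E c * ramanujanTerm N c k = if k ∈ E then (N : ℚ) else 0 := by
  have h (c : ℕ) : acSum N E c * ramanujanTerm N c k
      = ∑ d ∈ E, ramanujanTerm N d c * ramanujanTerm N c k := by
    rw [← sum_mul]; rfl
  simp_rw [h]
  rw [sum_comm, sum_congr rfl fun d hd =>
    ramanujanTerm_orthogonality hN (Nat.dvd_of_mem_divisors (hE hd)) hk]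
  simp

/-- If `E` is a nonempty set of divisors of `N` with `a_c(E) ≥ 0` for every divisor `c`
of `N`, then `E` is a filter in `D(N)`: `E = {d ∣ N : e ∣ d}` for some divisor `e` of `N`. -/
theorem acSum_nonneg_imp_filter
    (N : ℕ) (hN : 0 < N) (E : Finset ℕ) (hE : E ⊆ N.divisors) (hne : E.Nonempty)
    (ha : ∀ c ∈ N.divisors, 0 ≤ acSum N E c) :
    ∃ e ∈ N.divisors, E = N.divisors.filter (fun d => e ∣ d) := by
  have hle (k : ℕ) : ∀ c ∈ N.divisors,
      acSum N E c * ramanujanTerm N c k ≤ acSum N E c * ((N / c).totient : ℚ) := by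
    intro c hc
    refine mul_le_mul_of_nonneg_left ?_ (ha c hc)
    by_cases h : N ∣ c * k
    · exact (ramanujanTerm_of_dvd hN h).le
    · exact (ramanujanTerm_lt hN (Nat.dvd_of_mem_divisors hc) h).le
  have hNQ : (0 : ℚ) < N := by exact_mod_cast hN
  have htot : ∑ c ∈ N.divisors, acSum N E c * ((N / c).totient : ℚ)
      = if N ∈ E then (N : ℚ) else 0 := by
    rw [← sum_acSum_mul hN hE dvd_rfl]
    exact sum_congr rfl fun c _ => by rw [ramanujanTerm_of_dvd hN (dvd_mul_left N c)]
  have hNE : N ∈ E := by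
    obtain ⟨k, hk⟩ := hne
    have h := sum_le_sum (hle k)
    rw [sum_acSum_mul hN hE (Nat.dvd_of_mem_divisors (hE hk)), if_pos hk, htot] at h
    by_contra hn
    rw [if_neg hn] at h
    exact absurd h hNQ.not_ge
  rw [if_pos hNE] at htot
  -- `E` is the annihilator of the support of `c ↦ acSum N E c`
  have hmem : ∀ k ∈ N.divisors,
      (k ∈ E ↔ ∀ c ∈ N.divisors, acSum N E c ≠ 0 → N ∣ c * k) := by
    intro k hk
    have hsum := sum_acSum_mul hN hE (Nat.dvd_of_mem_divisors hk)
    constructor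
    · intro hkE c hc hc0
      rw [if_pos hkE, ← htot] at hsum
      have heq := (sum_eq_sum_iff_of_le (hle k)).1 hsum c hc
      by_contra hn
      exact (ramanujanTerm_lt hN (Nat.dvd_of_mem_divisors hc) hn).ne (mul_left_cancel₀ hc0 heq)
    · intro h
      by_contra hkE
      rw [if_neg hkE] at hsum
      have : ∑ c ∈ N.divisors, acSum N E c * ramanujanTerm N c k = N := by
        rw [← htot]
        refine sum_congr rfl fun c hc => ?_
        by_cases hc0 : acSum N E c = 0
        · simp [hc0]
        · rw [ramanujanTerm_of_dvd hN (h c hc hc0)]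
      exact hNQ.ne (hsum.symm.trans this)
  refine ⟨{c ∈ N.divisors | acSum N E c ≠ 0}.lcm (fun c => N / c), ?_, ?_⟩
  · refine Nat.mem_divisors.2 ⟨Finset.lcm_dvd_iff.2 fun c hc => ?_, hN.ne'⟩
    exact Nat.div_dvd_of_dvd (Nat.dvd_of_mem_divisors (mem_filter.1 hc).1)
  · have hiff : ∀ k, {c ∈ N.divisors | acSum N E c ≠ 0}.lcm (fun c => N / c) ∣ k ↔
        ∀ c ∈ N.divisors, acSum N E c ≠ 0 → N ∣ c * k := by
      intro k
      rw [Finset.lcm_dvd_iff]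
      simp only [mem_filter, and_imp]
      refine forall_congr' fun c => forall_congr' fun hc => forall_congr' fun _ => ?_
      exact Nat.div_dvd_iff_dvd_mul (Nat.dvd_of_mem_divisors hc) (Nat.pos_of_mem_divisors hc)
    ext k
    rw [mem_filter, hiff]
    exact ⟨fun h => ⟨hE h, (hmem k (hE h)).1 h⟩, fun h => (hmem k h.1).2 h.2⟩
end

section
/- Let N be a positive integer and let ε = (ε_{ij})_{0≤i,j<N} be a matrix with entries in {0,1} such that ε/N is an idempotent of the group algebra ℂ[ℤ_N × ℤ_N], i.e. Σ_{i'+i''≡i mod N} Σ_{j'+j''≡j mod N} ε_{i'j'} ε_{i''j''} = N·ε_{ij} for all 0 ≤ i,j < N. Then either ε = 0, or there exist a unique divisor d of N and a unique integer t with 0 ≤ t ≤ d−1 such that for all 0 ≤ i,j < N: ε_{ij} = 1 if and only if (N/d) | i and d | (j − t·(i/(N/d))). -/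
/-!
Let `S` be the support of `ε`, and assume it is nonempty. Summing the convolution identity over
all `(i, j)` gives `|S|² = N |S|`, so `|S| = N`. The identity at `g ∈ S` says that exactly
`N = |S|` elements `h ∈ S` satisfy `g - h ∈ S`, that is, all of them do. Hence `S` is a subgroup
of `ℤ_N × ℤ_N` of order `N`.

Let `A` be the projection of `S` to the first coordinate and `K = {j | (0, j) ∈ S}`, so that
`|A| |K| = N`. With `d = |A|`, the group `A` consists of the multiples of `N / d` and `K` of the
multiples of `d` (`mem_iff_dvd_val`: a subgroup of a cyclic group is determined by its order).
Some `(N / d, t)` lies in `S`; modulo `K` one can take `t < d`, and `S` is generated by this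
element and `K`, which is the claimed description. Conversely, `d` and `t` are read off from `S`:
`(0, j) ∈ S` iff `d ∣ j`, and `(N / d, j) ∈ S` iff `j ≡ t` modulo `d`.
-/

open Finset

lemma dvd_val_intCast {N d : ℕ} [NeZero N] (hd : d ∣ N) (z : ℤ) :
    d ∣ ((z : ZMod N)).val ↔ (d : ℤ) ∣ z := by
  have hdN : (d : ℤ) ∣ (N : ℤ) := by exact_mod_cast hd
  rw [← Int.natCast_dvd_natCast, ZMod.val_intCast, Int.emod_def, dvd_sub_left (hdN.mul_right _)]

/-- A subgroup of order `n` of a cyclic group of order `N` is the full `n`-torsion, because the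
latter has at most `n` elements; hence it consists of the multiples of `N / n`. -/
lemma mem_iff_dvd_val {N : ℕ} [NeZero N] (A : AddSubgroup (ZMod N)) (x : ZMod N) :
    x ∈ A ↔ N / Nat.card A ∣ x.val := by
  classical
  have hpos : 0 < Nat.card A := Nat.card_pos
  have hdvd : Nat.card A ∣ N := by
    simpa using A.card_addSubgroup_dvd_card
  have htors : ∀ y ∈ A, Nat.card A • y = 0 := by
    intro y hy
    have := card_nsmul_eq_zero' (x := (⟨y, hy⟩ : A))
    exact congrArg Subtype.val this
  have hsub : (univ.filter fun y : ZMod N => y ∈ A) ⊆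
      univ.filter fun y : ZMod N => Nat.card A • y = 0 := by
    intro y hy
    simp only [mem_filter, mem_univ, true_and] at hy ⊢
    exact htors y hy
  have hcard : (univ.filter fun y : ZMod N => y ∈ A).card = Nat.card A := by
    rw [Nat.card_eq_fintype_card, Fintype.card_subtype]
  have heq := Finset.eq_of_subset_of_card_le hsub (by
    rw [hcard]
    exact IsAddCyclic.card_nsmul_eq_zero_le hpos)
  have hx : x ∈ A ↔ Nat.card A • x = 0 := by
    have := Finset.ext_iff.1 heq x
    simpa using this
  rw [hx]
  obtain ⟨m, hm⟩ := hdvd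
  generalize Nat.card A = n at *
  have hcast : n • x = ((n * x.val : ℕ) : ZMod N) := by simp
  rw [hcast, ZMod.natCast_eq_zero_iff]
  subst hm
  rw [Nat.mul_div_cancel_left _ hpos, Nat.mul_dvd_mul_iff_left hpos]

lemma card_map_fst_mul_card_comap_inr {N : ℕ} [NeZero N] (S : AddSubgroup (ZMod N × ZMod N)) :
    Nat.card (S.map (AddMonoidHom.fst (ZMod N) (ZMod N))) *
      Nat.card (S.comap (AddMonoidHom.inr (ZMod N) (ZMod N))) = Nat.card S := by
  let f : S →+ ZMod N := (AddMonoidHom.fst (ZMod N) (ZMod N)).comp S.subtype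
  have hr : f.range = S.map (AddMonoidHom.fst (ZMod N) (ZMod N)) := by
    rw [AddMonoidHom.range_comp, AddSubgroup.range_subtype]
  let e : f.ker ≃ S.comap (AddMonoidHom.inr (ZMod N) (ZMod N)) :=
    { toFun := fun x => ⟨x.1.1.2, by
        have h : x.1.1.1 = 0 := x.2
        have h2 : ((0 : ZMod N), x.1.1.2) = x.1.1 := Prod.ext h.symm rfl
        simp [AddSubgroup.mem_comap, h2]⟩
      invFun := fun y => ⟨⟨(0, y.1), y.2⟩, rfl⟩
      left_inv := fun x => by
        have h : x.1.1.1 = 0 := x.2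
        exact Subtype.ext (Subtype.ext (Prod.ext h.symm rfl))
      right_inv := fun y => rfl }
  rw [← hr, ← Nat.card_congr e, ← AddSubgroup.index_ker, mul_comm, AddSubgroup.card_mul_index]

/-- The classification of the subgroups of order `N` of `ℤ_N × ℤ_N`: with `d` the order of the
projection to the first factor, the subgroup is generated by `(N / d, t)` and `(0, d)`. -/
theorem exists_parameters {N : ℕ} [NeZero N] (S : AddSubgroup (ZMod N × ZMod N))
    (hS : Nat.card S = N) :
    ∃ d t : ℕ, d ∣ N ∧ t < d ∧ ∀ i j : ZMod N, (i, j) ∈ S ↔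
      (N / d) ∣ i.val ∧ (d : ℤ) ∣ ((j.val : ℤ) - (t : ℤ) * ((i.val / (N / d) : ℕ) : ℤ)) := by
  have hmul := card_map_fst_mul_card_comap_inr S
  have hA := mem_iff_dvd_val (S.map (AddMonoidHom.fst (ZMod N) (ZMod N)))
  have hK := mem_iff_dvd_val (S.comap (AddMonoidHom.inr (ZMod N) (ZMod N)))
  have hd : 0 < Nat.card (S.map (AddMonoidHom.fst (ZMod N) (ZMod N))) := Nat.card_pos
  have hk : 0 < Nat.card (S.comap (AddMonoidHom.inr (ZMod N) (ZMod N))) := Nat.card_pos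
  rw [hS] at hmul
  generalize Nat.card (S.map (AddMonoidHom.fst (ZMod N) (ZMod N))) = d at *
  generalize Nat.card (S.comap (AddMonoidHom.inr (ZMod N) (ZMod N))) = k at *
  have hdN : d ∣ N := ⟨k, hmul.symm⟩
  have hNd : N / d = k := by rw [← hmul, Nat.mul_div_cancel_left _ hd]
  have hNk : N / k = d := by rw [← hmul, Nat.mul_div_cancel _ hk]
  rw [hNd] at hA
  rw [hNk] at hK
  have hK' : ∀ z : ℤ, ((0 : ZMod N), (z : ZMod N)) ∈ S ↔ (d : ℤ) ∣ z := fun z => by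
    rw [← dvd_val_intCast hdN, ← hK]
    rfl
  have hkA : (k : ZMod N) ∈ S.map (AddMonoidHom.fst (ZMod N) (ZMod N)) := by
    rw [hA]
    have := (dvd_val_intCast (N := N) (d := k) ⟨d, by rw [← hmul, mul_comm]⟩ (k : ℤ)).2 dvd_rfl
    simpa using this
  obtain ⟨⟨a, b⟩, hab, hak⟩ := hkA
  obtain rfl : a = k := hak
  have hgen : ((k : ZMod N), ((b.val % d : ℕ) : ZMod N)) ∈ S := by
    have h1 : ((0 : ZMod N), (((b.val : ℤ) - (b.val % d : ℕ) : ℤ) : ZMod N)) ∈ S := by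
      rw [hK']
      push_cast
      exact Int.dvd_self_sub_emod
    have h2 := S.sub_mem hab h1
    have h3 : b - (((b.val : ℤ) - (b.val % d : ℕ) : ℤ) : ZMod N) = ((b.val % d : ℕ) : ZMod N) := by
      rw [Int.cast_sub, Int.cast_natCast, Int.cast_natCast, ZMod.natCast_zmod_val, sub_sub_cancel]
    rwa [Prod.mk_sub_mk, sub_zero, h3] at h2
  refine ⟨d, b.val % d, hdN, Nat.mod_lt _ hd, fun i j => ?_⟩
  rw [hNd]
  generalize b.val % d = t at *
  have key : k ∣ i.val → ((i, j) ∈ S ↔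
      (d : ℤ) ∣ ((j.val : ℤ) - (t : ℤ) * ((i.val / k : ℕ) : ℤ))) := by
    intro hi
    have h1 := S.nsmul_mem hgen (i.val / k)
    have hik : (i.val / k) • (k : ZMod N) = i := by
      rw [nsmul_eq_mul, ← Nat.cast_mul, Nat.div_mul_cancel hi, ZMod.natCast_zmod_val]
    rw [Prod.smul_mk, hik] at h1
    have h2 : (((j.val : ℤ) - (t : ℤ) * ((i.val / k : ℕ) : ℤ) : ℤ) : ZMod N) +
        (i.val / k) • (t : ZMod N) = j := by
      rw [Int.cast_sub, Int.cast_mul, Int.cast_natCast, Int.cast_natCast, Int.cast_natCast,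
        ZMod.natCast_zmod_val, nsmul_eq_mul]
      ring
    rw [← hK']
    have h3 := S.add_mem_cancel_right
      (y := (0, (((j.val : ℤ) - (t : ℤ) * ((i.val / k : ℕ) : ℤ) : ℤ) : ZMod N))) h1
    rwa [Prod.mk_add_mk, zero_add, h2] at h3
  constructor
  · intro h
    have hi : k ∣ i.val := (hA i).1 ⟨(i, j), h, rfl⟩
    exact ⟨hi, (key hi).1 h⟩
  · rintro ⟨hi, h⟩
    exact (key hi).2 h

/-- The support of a nonzero `{0,1}`-valued `ε` with `ε * ε = N ε` is a subgroup of order `N`. -/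
theorem exists_support_subgroup {N : ℕ} [NeZero N] (ε : ZMod N → ZMod N → ℂ)
    (h01 : ∀ i j : ZMod N, ε i j = 0 ∨ ε i j = 1)
    (hidem : ∀ i j : ZMod N,
      ∑ i' : ZMod N, ∑ j' : ZMod N, ε i' j' * ε (i - i') (j - j') = (N : ℂ) * ε i j)
    (hne : ∃ i j, ε i j ≠ 0) :
    ∃ S : AddSubgroup (ZMod N × ZMod N), Nat.card S = N ∧ ∀ i j, ε i j = 1 ↔ (i, j) ∈ S := by
  classical
  let F : ZMod N × ZMod N → ℂ := fun p => ε p.1 p.2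
  let s : Finset (ZMod N × ZMod N) := univ.filter fun p => F p = 1
  have hs : ∀ p, p ∈ s ↔ F p = 1 := by simp [s]
  have hF : ∀ p, F p = if p ∈ s then 1 else 0 := by
    intro p
    by_cases h : F p = 1
    · rw [if_pos ((hs p).2 h), h]
    · rw [if_neg (fun h' => h ((hs p).1 h'))]
      exact (h01 p.1 p.2).resolve_right h
  have hconv : ∀ g, ∑ h, F h * F (g - h) = N * F g := by
    intro g
    rw [Fintype.sum_prod_type]
    exact hidem g.1 g.2
  have hsum : ∑ g, F g = (s.card : ℂ) := by simp [hF]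
  obtain ⟨i₀, j₀, h₀⟩ := hne
  have hmem₀ : (i₀, j₀) ∈ s := (hs _).2 ((h01 i₀ j₀).resolve_left h₀)
  have hcard : s.card = N := by
    have h1 : ∑ g, ∑ h, F h * F (g - h) = N * (s.card : ℂ) := by
      rw [← hsum, mul_sum]
      exact sum_congr rfl fun g _ => hconv g
    rw [sum_comm] at h1
    have h2 : ∀ h, ∑ g, F h * F (g - h) = F h * s.card := by
      intro h
      rw [← mul_sum, ← hsum]
      congr 1
      exact Equiv.sum_comp (Equiv.subRight h) F
    simp only [h2] at h1
    rw [← sum_mul, hsum] at h1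
    have h3 : (s.card : ℂ) ≠ 0 := by
      exact_mod_cast (card_pos.2 ⟨_, hmem₀⟩).ne'
    exact_mod_cast mul_right_cancel₀ h3 h1
  have hsub : ∀ g ∈ s, ∀ h ∈ s, g - h ∈ s := by
    intro g hg
    have h1 := hconv g
    rw [(hs g).1 hg, mul_one] at h1
    have h2 : ∑ h, F h * F (g - h) = ((s.filter fun h => g - h ∈ s).card : ℂ) := by
      simp only [hF, ite_mul, one_mul, zero_mul]
      rw [sum_ite_mem, univ_inter, sum_boole]
    rw [h2] at h1
    have h3 : (s.filter fun h => g - h ∈ s).card = s.card := by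
      rw [hcard]
      exact_mod_cast h1
    exact card_filter_eq_iff.1 h3
  have hzero : (0 : ZMod N × ZMod N) ∈ s := by simpa using hsub _ hmem₀ _ hmem₀
  have hneg : ∀ g ∈ s, -g ∈ s := fun g hg => by simpa using hsub 0 hzero g hg
  refine ⟨{ carrier := s, zero_mem' := hzero, neg_mem' := fun {g} hg => hneg g hg,
            add_mem' := fun {g h} hg hh => by simpa using hsub g hg (-h) (hneg h hh) }, ?_, ?_⟩
  · exact (Nat.card_eq_card_toFinset (s : Set (ZMod N × ZMod N))).trans (by simpa using hcard)
  · intro i j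
    exact (hs (i, j)).symm

/-- All idempotents `ε/N` of `ℂ[ℤ_N × ℤ_N]` with `{0,1}`-coefficients `ε_{ij}` are either
trivial (`ε = 0`), or given by `ε_{ij} = δ_{(N/d ∣ i)} δ_{(d ∣ j − t·i/(N/d))}` for a unique
divisor `d ∣ N` and a unique `0 ≤ t ≤ d − 1`. -/
theorem zero_one_idempotents_classification
    (N : ℕ) [NeZero N] (ε : ZMod N → ZMod N → ℂ)
    (h01 : ∀ i j : ZMod N, ε i j = 0 ∨ ε i j = 1)
    (hidem : ∀ i j : ZMod N,
      ∑ i' : ZMod N, ∑ j' : ZMod N, ε i' j' * ε (i - i') (j - j') = (N : ℂ) * ε i j) :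
    (∀ i j : ZMod N, ε i j = 0) ∨
    ∃! dt : ℕ × ℕ, dt.1 ∣ N ∧ dt.2 < dt.1 ∧
      ∀ i j : ZMod N,
        ε i j = 1 ↔
          (N / dt.1) ∣ i.val ∧
            (dt.1 : ℤ) ∣ ((j.val : ℤ) - (dt.2 : ℤ) * ((i.val / (N / dt.1) : ℕ) : ℤ)) := by
  by_cases hne : ∃ i j, ε i j ≠ 0
  swap
  · left
    push Not at hne
    exact hne
  right
  obtain ⟨S, hcard, hS⟩ := exists_support_subgroup ε h01 hidem hne
  obtain ⟨d, t, hd, ht, hdt⟩ := exists_parameters S hcard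
  refine ⟨(d, t), ⟨hd, ht, fun i j => (hS i j).trans (hdt i j)⟩, ?_⟩
  rintro ⟨d', t'⟩ ⟨hd', ht', hdt'⟩
  dsimp only at hd' ht' hdt'
  have hiff : ∀ i j : ZMod N, _ ↔ _ := fun i j =>
    (hdt i j).symm.trans ((hS i j).symm.trans (hdt' i j))
  -- The elements of the form `(0, j)` in the support determine `d`.
  have hz : ∀ z : ℤ, (d : ℤ) ∣ z ↔ (d' : ℤ) ∣ z := by
    intro z
    have := hiff 0 z
    simp only [ZMod.val_zero, dvd_zero, Nat.zero_div, Nat.cast_zero, mul_zero, sub_zero, true_and,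
      Int.natCast_dvd_natCast, dvd_val_intCast hd, dvd_val_intCast hd'] at this
    exact this
  have hdd : d' = d := Nat.dvd_antisymm
    (by exact_mod_cast (hz d).1 dvd_rfl) (by exact_mod_cast (hz d').2 dvd_rfl)
  subst hdd
  have htt : t' = t := by
    rcases Nat.lt_or_ge 1 d' with h1 | h1
    · have hN : 0 < N := NeZero.pos N
      have hlt : N / d' < N := Nat.div_lt_self hN h1
      have hpos : 0 < N / d' := Nat.div_pos (Nat.le_of_dvd hN hd) (by omega)
      have hle : d' ≤ N := Nat.le_of_dvd hN hd
      have := (hiff ((N / d' : ℕ) : ZMod N) (t : ZMod N)).1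
      rw [ZMod.val_natCast_of_lt hlt, ZMod.val_natCast_of_lt (ht.trans_le hle),
        Nat.div_self hpos] at this
      obtain ⟨-, h2⟩ := this ⟨dvd_rfl, by simp⟩
      have h3 : ((t : ℤ) - t') = 0 := by
        apply Int.eq_zero_of_abs_lt_dvd (m := (d' : ℤ))
        · simpa using h2
        · rw [abs_lt]
          omega
      omega
    · omega
  rw [htt]
end

section
/- Let G be a finite abelian group (written additively) and let H₁, H₂ be subgroups of G of equal cardinality d. Let ω : H₁ × H₂ → ℂ^× be a pairing of groups, i.e. ω(x+x', y) = ω(x,y)ω(x',y) and ω(x, y+y') = ω(x,y)ω(x,y') for all x,x' ∈ H₁, y,y' ∈ H₂. Define g : G × G → ℂ by g(x,y) = (1/d)·ω(x,y) if x ∈ H₁ and y ∈ H₂, and g(x,y) = 0 otherwise. Then g satisfies: for all x,y ∈ G, g(x,y) = Σ_{y₁+y₂=y} g(x,y₁)g(x,y₂) and g(x,y) = Σ_{x₁+x₂=x} g(x₁,y)g(x₂,y); moreover Σ_{y∈G} g(0,y) = 1 and Σ_{x∈G} g(x,0) = 1. -/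
/-!
For fixed `x ∈ H₁` the function `g x` is `1/d` times a character of `H₂`, extended by zero to `G`.
The convolution square of a character `χ` of a subgroup `H` of order `d` is `d • χ`, because every
one of the `d` nonzero terms `χ a * χ (y - a)` equals `χ y`; hence `χ / d`, extended by zero, is a
convolution idempotent (`conv_self_of_char`). If `x ∉ H₁`, then `g x = 0` and the equation is
trivial. The normalizations hold because a pairing is trivial when one argument is zero, so `g 0`
and `g · 0` are the uniform distributions on `H₂` and `H₁`. The statements in the first variable
follow from the same lemmas by symmetry.
-/

open Finset

/-- A function with value `c` on a subgroup `H` and zero elsewhere sums to `|H| * c`. -/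
lemma sum_const_on_subgroup {G : Type*} [AddCommGroup G] [Fintype G]
    (H : AddSubgroup G) (c : ℂ) (f : G → ℂ) (hin : ∀ a ∈ H, f a = c) (hout : ∀ a ∉ H, f a = 0) :
    ∑ a, f a = (Nat.card H : ℂ) * c := by
  classical
  have h : ∀ a, f a = if a ∈ H then c else 0 := fun a => by
    split_ifs with ha
    exacts [hin a ha, hout a ha]
  simp_rw [h]
  rw [← Finset.sum_filter, Finset.sum_const, nsmul_eq_mul, Nat.card_eq_fintype_card,
    Fintype.card_subtype]

/-- A character of `H` divided by `|H|` and extended by zero is idempotent under convolution. -/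
lemma conv_self_of_char {G : Type*} [AddCommGroup G] [Fintype G] [DecidableEq G]
    (H : AddSubgroup G) (d : ℕ) (hd : 0 < d) (hH : Nat.card H = d) (χ : H → ℂˣ)
    (hχ : ∀ a b, χ (a + b) = χ a * χ b) (f : G → ℂ)
    (hin : ∀ (a : G) (ha : a ∈ H), f a = (1 / (d : ℂ)) * (χ ⟨a, ha⟩ : ℂ))
    (hout : ∀ a ∉ H, f a = 0) (y : G) :
    f y = ∑ p ∈ univ.filter (fun p : G × G => p.1 + p.2 = y), f p.1 * f p.2 := by
  have hd0 : (d : ℂ) ≠ 0 := by exact_mod_cast hd.ne'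
  have hre : ∑ p ∈ univ.filter (fun p : G × G => p.1 + p.2 = y), f p.1 * f p.2
      = ∑ a, f a * f (y - a) := by
    refine Finset.sum_bij' (fun p _ => p.1) (fun a _ => (a, y - a)) ?_ ?_ ?_ ?_ ?_
    · simp
    · simp
    · rintro ⟨a, b⟩ h
      simp only [mem_filter, mem_univ, true_and] at h
      simp [← h]
    · simp
    · rintro ⟨a, b⟩ h
      simp only [mem_filter, mem_univ, true_and] at h
      simp [← h]
  rw [hre]
  by_cases hy : y ∈ H
  · rw [sum_const_on_subgroup H ((1 / (d : ℂ)) * f y), hH]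
    · field_simp
    · intro a ha
      have hb : y - a ∈ H := H.sub_mem hy ha
      have hmul : χ ⟨y, hy⟩ = χ ⟨a, ha⟩ * χ ⟨y - a, hb⟩ := by
        rw [← hχ]
        congr 1
        ext
        simp
      rw [hin a ha, hin _ hb, hin y hy, hmul]
      push_cast
      ring
    · intro a ha
      rw [hout a ha, zero_mul]
  · rw [hout y hy]
    refine (Finset.sum_eq_zero fun a _ => ?_).symm
    by_cases ha : a ∈ H
    · have hb : y - a ∉ H := fun hb => hy (by simpa using H.add_mem hb ha)
      rw [hout _ hb, mul_zero]
    · rw [hout a ha, zero_mul]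

/-- Let `G` be a finite abelian group, `H₁, H₂ ≤ G` subgroups of equal cardinality `d`, and
`ω : H₁ × H₂ → ℂˣ` a pairing (multiplicative in each argument). Then
`g(x,y) = (1/d)·ω(x,y)·δ_{x ∈ H₁}·δ_{y ∈ H₂}` satisfies the group equations
`g(x,y) = ∑_{y₁+y₂=y} g(x,y₁)g(x,y₂)`, `g(x,y) = ∑_{x₁+x₂=x} g(x₁,y)g(x₂,y)`,
`∑_y g(0,y) = 1` and `∑_x g(x,0) = 1`. -/
theorem pairing_solution_of_group_equations
    {G : Type*} [AddCommGroup G] [Fintype G] [DecidableEq G]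
    (H₁ H₂ : AddSubgroup G) (d : ℕ) (hd : 0 < d)
    (hd1 : Nat.card H₁ = d) (hd2 : Nat.card H₂ = d)
    (ω : H₁ → H₂ → ℂˣ)
    (hω₁ : ∀ (x x' : H₁) (y : H₂), ω (x + x') y = ω x y * ω x' y)
    (hω₂ : ∀ (x : H₁) (y y' : H₂), ω x (y + y') = ω x y * ω x y')
    (g : G → G → ℂ)
    (hg : ∀ x y : G,
      (∀ (hx : x ∈ H₁) (hy : y ∈ H₂), g x y = (1 / (d : ℂ)) * (ω ⟨x, hx⟩ ⟨y, hy⟩ : ℂ)) ∧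
      (x ∉ H₁ ∨ y ∉ H₂ → g x y = 0)) :
    (∀ x y : G,
      g x y = ∑ p ∈ univ.filter (fun p : G × G => p.1 + p.2 = y), g x p.1 * g x p.2) ∧
    (∀ x y : G,
      g x y = ∑ p ∈ univ.filter (fun p : G × G => p.1 + p.2 = x), g p.1 y * g p.2 y) ∧
    (∑ y : G, g 0 y = 1) ∧ (∑ x : G, g x 0 = 1) := by
  have hd0 : (d : ℂ) ≠ 0 := by exact_mod_cast hd.ne'
  have hω0l : ∀ y, ω 0 y = 1 := fun y => by simpa using hω₁ 0 0 y
  have hω0r : ∀ x, ω x 0 = 1 := fun x => by simpa using hω₂ x 0 0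
  refine ⟨fun x y => ?_, fun x y => ?_, ?_, ?_⟩
  · by_cases hx : x ∈ H₁
    · exact conv_self_of_char H₂ d hd hd2 (ω ⟨x, hx⟩) (hω₂ _) (g x)
        (fun a ha => (hg x a).1 hx ha) (fun a ha => (hg x a).2 (Or.inr ha)) y
    · have h0 : ∀ a, g x a = 0 := fun a => (hg x a).2 (Or.inl hx)
      simp [h0]
  · by_cases hy : y ∈ H₂
    · exact conv_self_of_char H₁ d hd hd1 (fun a => ω a ⟨y, hy⟩) (fun a b => hω₁ a b _)
        (fun a => g a y) (fun a ha => (hg a y).1 ha hy) (fun a ha => (hg a y).2 (Or.inl ha)) x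
    · have h0 : ∀ a, g a y = 0 := fun a => (hg a y).2 (Or.inr hy)
      simp [h0]
  · rw [sum_const_on_subgroup H₂ (1 / (d : ℂ)) (g 0) _ fun a ha => (hg 0 a).2 (Or.inr ha), hd2]
    · field_simp
    · intro a ha
      have h := hω0l ⟨a, ha⟩
      rw [(hg 0 a).1 H₁.zero_mem ha]
      erw [h]
      simp
  · rw [sum_const_on_subgroup H₁ (1 / (d : ℂ)) (fun a => g a 0) _
      fun a ha => (hg a 0).2 (Or.inl ha), hd1]
    · field_simp
    · intro a ha
      have h := hω0r ⟨a, ha⟩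
      rw [(hg a 0).1 ha H₂.zero_mem]
      erw [h]
      simp
end
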